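/- arXiv:math/0608516 — 4 statements merged into one kernel-verified Lean document; each statement's English description precedes it below -/
import Mathlib

section
/- Let I ⊆ ℝ be an open interval and G : I → ℝ a C² function with G' ≥ 0 on I. Then at every point of the graphical strip S = {(yG(t), y, t) : y ∈ ℝ, t ∈ I} one has Y(p/W) = 0 and Y(q/W) = 0, where the derivatives are taken of the ambient functions p/W and q/W on ℝ×ℝ×I and then evaluated at points of S. -/
/-!
Since `d(p/W) = q (q dp - p dq) / W³` and `d(q/W) = p (p dq - q dp) / W³`, both claims reduce to
`q · Dp = p · Dq` along the strip, where `D = p X₁ + q X₂`. On the strip `x = yG(t)` we have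
`q = -G p`, hence `D = p (X₁ - G X₂)`, and the identity becomes
`G · (X₁ - G X₂) p + (X₁ - G X₂) q = 0`. Writing this out with the partial derivatives of `p` and
`q`, the terms in `G''` cancel, and so do the terms in `G'`. The hypothesis `G' ≥ 0` gives
`p ≥ 1`, so that `W > 0` and `p/W`, `q/W` are differentiable.
-/


noncomputable def pfun (G : ℝ → ℝ) (g : ℝ × ℝ × ℝ) : ℝ :=
  1 + g.2.1 ^ 2 / 2 * deriv G g.2.2

noncomputable def qfun (G : ℝ → ℝ) (g : ℝ × ℝ × ℝ) : ℝ :=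
  -G g.2.2 - g.1 * g.2.1 / 2 * deriv G g.2.2

noncomputable def omfun (G : ℝ → ℝ) (g : ℝ × ℝ × ℝ) : ℝ :=
  -g.2.1 * deriv G g.2.2

noncomputable def Wfun (G : ℝ → ℝ) (g : ℝ × ℝ × ℝ) : ℝ :=
  Real.sqrt (pfun G g ^ 2 + qfun G g ^ 2)

noncomputable def dX (f : ℝ × ℝ × ℝ → ℝ) (g : ℝ × ℝ × ℝ) : ℝ :=
  deriv (fun x => f (x, g.2.1, g.2.2)) g.1

noncomputable def dYc (f : ℝ × ℝ × ℝ → ℝ) (g : ℝ × ℝ × ℝ) : ℝ :=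
  deriv (fun y => f (g.1, y, g.2.2)) g.2.1

noncomputable def dT (f : ℝ × ℝ × ℝ → ℝ) (g : ℝ × ℝ × ℝ) : ℝ :=
  deriv (fun t => f (g.1, g.2.1, t)) g.2.2

noncomputable def X1op (f : ℝ × ℝ × ℝ → ℝ) (g : ℝ × ℝ × ℝ) : ℝ :=
  dX f g - g.2.1 / 2 * dT f g

noncomputable def X2op (f : ℝ × ℝ × ℝ → ℝ) (g : ℝ × ℝ × ℝ) : ℝ :=
  dYc f g + g.1 / 2 * dT f g

noncomputable def Yop (G : ℝ → ℝ) (f : ℝ × ℝ × ℝ → ℝ) (g : ℝ × ℝ × ℝ) : ℝ :=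
  (pfun G g * X1op f g + qfun G g * X2op f g) / Wfun G g

/-- The derivatives of the two components of the normalized planar curve `(P, Q)/|(P, Q)|`. -/
lemma hasDerivAt_unit {P Q : ℝ → ℝ} {P' Q' s p q w : ℝ} (hP : HasDerivAt P P' s)
    (hQ : HasDerivAt Q Q' s) (hp : P s = p) (hq : Q s = q) (hw : √(p ^ 2 + q ^ 2) = w)
    (hpos : 0 < p) :
    HasDerivAt (fun r => P r / √(P r ^ 2 + Q r ^ 2)) (q * (q * P' - p * Q') / w ^ 3) s ∧
    HasDerivAt (fun r => Q r / √(P r ^ 2 + Q r ^ 2)) (p * (p * Q' - q * P') / w ^ 3) s := by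
  subst hp hq
  have hS : 0 < P s ^ 2 + Q s ^ 2 := by positivity
  have hw0 : 0 < w := hw ▸ Real.sqrt_pos.2 hS
  have hw2 : w ^ 2 = P s ^ 2 + Q s ^ 2 := by rw [← hw, Real.sq_sqrt hS.le]
  have hW := ((hP.pow 2).add (hQ.pow 2)).sqrt hS.ne'
  simp only [Pi.add_apply, Pi.pow_apply] at hW
  have hne : √(P s ^ 2 + Q s ^ 2) ≠ 0 := by rw [hw]; exact hw0.ne'
  constructor
  · refine (hP.div hW hne).congr_deriv ?_
    rw [hw]
    field_simp
    rw [hw2]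
    push_cast
    ring
  · refine (hQ.div hW hne).congr_deriv ?_
    rw [hw]
    field_simp
    rw [hw2]
    push_cast
    ring

/-- At every point of the graphical strip `x = yG(t)` one has
`Y(p/W) = 0` and `Y(q/W) = 0`, where `Yf = (p·X1f + q·X2f)/W`. -/
theorem stmt5 (I : Set ℝ) (hIo : IsOpen I) (hIc : I.OrdConnected)
    (G : ℝ → ℝ) (hG : ContDiffOn ℝ 2 G I) (hG' : ∀ t ∈ I, 0 ≤ deriv G t) :
    ∀ y : ℝ, ∀ t ∈ I,
      Yop G (fun g => pfun G g / Wfun G g) (y * G t, y, t) = 0 ∧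
      Yop G (fun g => qfun G g / Wfun G g) (y * G t, y, t) = 0 := by
  intro y t ht
  have hGt : HasDerivAt G (deriv G t) t :=
    ((hG.differentiableOn (by norm_num)).differentiableAt (hIo.mem_nhds ht)).hasDerivAt
  have hGt' : HasDerivAt (deriv G) (deriv (deriv G) t) t :=
    (((hG.deriv_of_isOpen (m := 1) hIo (by norm_num)).differentiableOn
      (by norm_num)).differentiableAt (hIo.mem_nhds ht)).hasDerivAt
  have hg := hG' t ht
  set a := G t with ha
  set g := deriv G t with hgd
  set h := deriv (deriv G) t
  have hp : 0 < 1 + y ^ 2 / 2 * g := by positivity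
  obtain ⟨w, hw⟩ : ∃ w, √((1 + y ^ 2 / 2 * g) ^ 2 + (-a - y * a * y / 2 * g) ^ 2) = w := ⟨_, rfl⟩
  have pX : HasDerivAt (fun _ : ℝ => 1 + y ^ 2 / 2 * g) 0 (y * a) := hasDerivAt_const _ _
  have qX : HasDerivAt (fun x : ℝ => -a - x * y / 2 * g) (-(y * g / 2)) (y * a) := by
    refine ((((hasDerivAt_id' (y * a)).mul_const y).div_const 2).mul_const g
      |>.const_sub (-a)).congr_deriv ?_
    ring
  have pY : HasDerivAt (fun s : ℝ => 1 + s ^ 2 / 2 * g) (y * g) y := by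
    refine ((((hasDerivAt_id' y).pow 2).div_const 2).mul_const g |>.const_add 1).congr_deriv ?_
    push_cast
    ring
  have qY : HasDerivAt (fun s : ℝ => -a - y * a * s / 2 * g) (-(y * a * g / 2)) y := by
    refine ((((hasDerivAt_id' y).const_mul (y * a)).div_const 2).mul_const g
      |>.const_sub (-a)).congr_deriv ?_
    ring
  have pT : HasDerivAt (fun s : ℝ => 1 + y ^ 2 / 2 * deriv G s) (y ^ 2 / 2 * h) t :=
    (hGt'.const_mul _).const_add 1
  have qT : HasDerivAt (fun s : ℝ => -G s - y * a * y / 2 * deriv G s)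
      (-g - y * a * y / 2 * h) t := hGt.neg.sub (hGt'.const_mul _)
  have eX := hasDerivAt_unit pX qX rfl rfl hw hp
  have eY := hasDerivAt_unit pY qY rfl rfl hw hp
  have eT := hasDerivAt_unit pT qT rfl rfl hw hp
  simp only [Yop, X1op, X2op, dX, dYc, dT, Wfun, pfun, qfun, ← ha, ← hgd]
  rw [eX.1.deriv, eY.1.deriv, eT.1.deriv, eX.2.deriv, eY.2.deriv, eT.2.deriv]
  constructor <;> ring
end

section
/- Let δ > 0, I_δ = (−4δ, 4δ), and let G be C² on an open interval containing the closure of I_δ, with G'(t) > 0 for every t ∈ I_δ. Fix χ ∈ C_c^∞(ℝ) with 0 ≤ χ ≤ 1, χ ≡ 1 on [−δ,δ], supp χ ⊆ [−2δ,2δ], and fix a mollifier ρ ∈ C_c^∞(ℝ) with ρ ≥ 0, supp ρ ⊆ [−1,1], ∫_ℝ ρ = 1. For k ∈ ℕ put χ_k(s) = χ(s/k), ρ_k(s) = kρ(ks), G_k = G ⋆ ρ_k, and f_k(y,t) = χ_k(y)·χ(t)/√(1 + (y²/2)·G_k'(t)). Then there exists k₀ ∈ ℕ such that for all k > k₀: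 ∫∫_{ℝ×I_δ} [(1 + (y²/2)G'(t))/√(1+G(t)²)]·(∂f_k/∂y)² dy dt < 2·∫∫_{ℝ×I_δ} [G'(t)/((1 + (y²/2)G'(t))·√(1+G(t)²))]·f_k(y,t)² dy dt. -/
/-!
The strict inequality has a factor of slack. For fixed `t` write `a = G'(t)/2`, `b = G_k'(t)/2`.
If `a = b`, then on the full line (no cut-off in `y`) the left side is `∫ b²y²/(1+by²)²` and the
right side is `4 ∫ b/(1+by²)²`, both up to the same factor `χ(t)²/√(1+G²)`; the two integrals are
equal because `(b - b²y²)/(1+by²)²` is the derivative of `by/(1+by²)`, so the ratio is `1/4`.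

This leaves room for crude bounds. The square of the two-term derivative `∂f_k/∂y` is estimated by
`(u - v)² ≤ 2u² + 2v²`, which costs a factor `2`; replacing `a` by `b` is free up to a factor `11/10`
each time, since `G_k'` is uniformly close to `G'` on `[-2δ,2δ]` (`abs_deriv_Gmol_sub_le`) and `G'`
is bounded below by a positive constant there. The cut-off terms live on `|y| ≤ 2kδ` and contribute
`O(1/k)`, which is small against the core integral `∫_{|y| ≤ kδ} b/(1+by²)²`, bounded below
uniformly in `t` and `k`. The outcome is `line_estimate`: for each `t`, the inner left integral is
at most `9/10` of the right one. Integrating in `t` only requires the right side to be integrable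
(`integrableOn_inner_rhs`) and to have positive integral.
-/

open MeasureTheory

/-- The mollified function `G_k = G ⋆ ρ_k`, where `ρ_k(s) = kρ(ks)`. -/
noncomputable def Gmol (G ρ : ℝ → ℝ) (k : ℕ) (t : ℝ) : ℝ :=
  ∫ s : ℝ, (k : ℝ) * ρ ((k : ℝ) * s) * G (t - s)

/-- The profile `f_k(y,t) = χ_k(y)·χ(t)/√(1 + (y²/2)·G_k'(t))`, with `χ_k(s) = χ(s/k)`. -/
noncomputable def fk (G χ ρ : ℝ → ℝ) (k : ℕ) (y t : ℝ) : ℝ :=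
  χ (y / (k : ℝ)) * χ t / Real.sqrt (1 + y ^ 2 / 2 * deriv (Gmol G ρ k) t)

/-! ### The inequality on a line of constant `t` -/

/-- Pointwise bound for the left integrand: the summands bound the squares of the two terms of the
product rule, with `11/5 = 2 · 11/10` from `(u - v)² ≤ 2u² + 2v²` and
`(1 + a y²)/(1 + b y²) ≤ 11/10`. -/
lemma profile_deriv_sq_le {χ : ℝ → ℝ} (hχ : Differentiable ℝ χ) {D : ℝ}
    (hχ0 : ∀ s, 0 ≤ χ s) (hχ1 : ∀ s, χ s ≤ 1) (hD : ∀ s, |deriv χ s| ≤ D) {a b K : ℝ}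
    (hb : 0 < b) (hab : a ≤ 11 / 10 * b) (hK : 0 < K) (y : ℝ) :
    (1 + a * y ^ 2) * deriv (fun y' => χ (y' / K) / √(1 + b * y' ^ 2)) y ^ 2
      ≤ 11 / 5 * (D ^ 2 / K ^ 2) + 11 / 5 * (b ^ 2 * y ^ 2 / (1 + b * y ^ 2) ^ 2) := by
  have hP : 0 < 1 + b * y ^ 2 := by positivity
  set P := 1 + b * y ^ 2 with hPdef
  have hS : 0 < √P := Real.sqrt_pos.2 hP
  have hS2 : √P ^ 2 = P := Real.sq_sqrt hP.le
  have h1 : HasDerivAt (fun y' => χ (y' / K)) (deriv χ (y / K) * (1 / K)) y :=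
    (hχ (y / K)).hasDerivAt.comp y ((hasDerivAt_id y).div_const K)
  have h2 : HasDerivAt (fun y' : ℝ => √(1 + b * y' ^ 2)) (b * y / √P) y := by
    have h3 : HasDerivAt (fun y' : ℝ => 1 + b * y' ^ 2) (b * (2 * y)) y := by
      simpa using ((hasDerivAt_pow 2 y).const_mul b).const_add 1
    refine (h3.sqrt hP.ne').congr_deriv ?_
    rw [← hPdef]
    field_simp
  have h := (h1.div h2 hS.ne').deriv
  have h' : deriv (fun y' => χ (y' / K) / √(1 + b * y' ^ 2)) y
      = (deriv χ (y / K) / K - χ (y / K) * (b * y) / P) / √P := by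
    refine h.trans ?_
    rw [← hPdef, hS2]
    field_simp
    rw [hS2]
  rw [h', div_pow, hS2]
  set u := deriv χ (y / K) / K
  set v := χ (y / K) * (b * y) / P
  have hu : u ^ 2 ≤ D ^ 2 / K ^ 2 := by
    rw [div_pow]
    have := hD (y / K)
    rw [← sq_abs (deriv χ (y / K))]
    gcongr
  have hv : v ^ 2 ≤ b ^ 2 * y ^ 2 / P ^ 2 := by
    simp only [v]
    rw [div_pow]
    gcongr
    have : χ (y / K) ^ 2 ≤ 1 := pow_le_one₀ (hχ0 _) (hχ1 _)
    calc (χ (y / K) * (b * y)) ^ 2 = χ (y / K) ^ 2 * (b ^ 2 * y ^ 2) := by ring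
      _ ≤ 1 * (b ^ 2 * y ^ 2) := by gcongr
      _ = _ := one_mul _
  have hr : (1 + a * y ^ 2) / P ≤ 11 / 10 := by
    rw [div_le_iff₀ hP]
    nlinarith [mul_le_mul_of_nonneg_right hab (sq_nonneg y)]
  calc (1 + a * y ^ 2) * ((u - v) ^ 2 / P) = (1 + a * y ^ 2) / P * (u - v) ^ 2 := by ring
    _ ≤ 11 / 10 * (2 * u ^ 2 + 2 * v ^ 2) := by
        gcongr
        nlinarith [sq_nonneg (u + v)]
    _ ≤ _ := by linarith

/-- The core integrals of the two sides compare without loss: the difference of the integrands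
is the derivative of `b y / (1 + b y²)`, which is odd and nonnegative at `N`. -/
lemma integral_core_le {b N : ℝ} (hb : 0 < b) (hN : 0 ≤ N) :
    ∫ y in Set.Icc (-N) N, b ^ 2 * y ^ 2 / (1 + b * y ^ 2) ^ 2
      ≤ ∫ y in Set.Icc (-N) N, b / (1 + b * y ^ 2) ^ 2 := by
  have hP : ∀ y : ℝ, (1 + b * y ^ 2) ≠ 0 := fun y => by positivity
  have c1 : Continuous fun y : ℝ => b ^ 2 * y ^ 2 / (1 + b * y ^ 2) ^ 2 :=
    Continuous.div (by fun_prop) (by fun_prop) fun y => pow_ne_zero 2 (hP y)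
  have c2 : Continuous fun y : ℝ => b / (1 + b * y ^ 2) ^ 2 :=
    Continuous.div (by fun_prop) (by fun_prop) fun y => pow_ne_zero 2 (hP y)
  have hle : -N ≤ N := by linarith
  rw [integral_Icc_eq_integral_Ioc, integral_Icc_eq_integral_Ioc,
    ← intervalIntegral.integral_of_le hle, ← intervalIntegral.integral_of_le hle, ← sub_nonneg,
    ← intervalIntegral.integral_sub (c2.intervalIntegrable _ _) (c1.intervalIntegrable _ _)]
  have hd : ∀ y ∈ Set.uIcc (-N) N, HasDerivAt (fun y : ℝ => b * y / (1 + b * y ^ 2))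
      (b / (1 + b * y ^ 2) ^ 2 - b ^ 2 * y ^ 2 / (1 + b * y ^ 2) ^ 2) y := by
    intro y _
    have h3 : HasDerivAt (fun y' : ℝ => 1 + b * y' ^ 2) (b * (2 * y)) y := by
      simpa using ((hasDerivAt_pow 2 y).const_mul b).const_add 1
    have h4 : HasDerivAt (fun y' : ℝ => b * y') b y := by
      simpa using (hasDerivAt_id y).const_mul b
    refine (h4.div h3 (hP y)).congr_deriv ?_
    rw [← sub_div]
    congr 1
    ring
  rw [intervalIntegral.integral_eq_sub_of_hasDerivAt hd ((c2.sub c1).intervalIntegrable _ _)]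
  have : 0 ≤ b * N / (1 + b * N ^ 2) := by positivity
  have e : b * -N / (1 + b * (-N) ^ 2) = -(b * N / (1 + b * N ^ 2)) := by
    rw [neg_sq]; ring
  rw [e]; linarith

/-- A lower bound for the core integral, uniform in `b ∈ [m, M]` and `N ≥ 1`; it absorbs the
error terms created by the cut-off. -/
lemma le_integral_core {b N m M : ℝ} (hm : 0 < m) (hmb : m ≤ b) (hbM : b ≤ M) (hN : 1 ≤ N) :
    m / (1 + M) ^ 2 ≤ ∫ y in Set.Icc (-N) N, b / (1 + b * y ^ 2) ^ 2 := by
  have hb : 0 < b := hm.trans_le hmb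
  have c2 : Continuous fun y : ℝ => b / (1 + b * y ^ 2) ^ 2 :=
    Continuous.div (by fun_prop) (by fun_prop) fun y => by positivity
  calc m / (1 + M) ^ 2 = ∫ y in Set.Icc (0 : ℝ) 1, m / (1 + M) ^ 2 := by simp
    _ ≤ ∫ y in Set.Icc (0 : ℝ) 1, b / (1 + b * y ^ 2) ^ 2 := by
        refine setIntegral_mono_on (by simp) c2.continuousOn.integrableOn_Icc
          measurableSet_Icc fun y hy => ?_
        have : y ^ 2 ≤ 1 := pow_le_one₀ hy.1 hy.2
        gcongr
        nlinarith
    _ ≤ _ := by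
        refine setIntegral_mono_set c2.continuousOn.integrableOn_Icc
          (Filter.Eventually.of_forall fun y => by positivity) (LE.le.eventuallyLE ?_)
        exact Set.Icc_subset_Icc (by linarith) hN

/-- The inequality for fixed `t`, with `a = G'(t)/2` and `b = G_k'(t)/2`, after removal of the
common factor `χ(t)²/√(1 + G(t)²)`. The constant `9/10` records a gap that survives integration
in `t`. -/
lemma line_estimate {χ : ℝ → ℝ} (hχ : ContDiff ℝ (⊤ : ℕ∞) χ) {D δ : ℝ} (hδ : 0 < δ)
    (hχ0 : ∀ s, 0 ≤ χ s) (hχ1 : ∀ s, χ s ≤ 1)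
    (hχeq : ∀ s ∈ Set.Icc (-δ) δ, χ s = 1)
    (hχsupp : Function.support χ ⊆ Set.Icc (-(2 * δ)) (2 * δ))
    (hD : ∀ s, |deriv χ s| ≤ D) {a b K m M : ℝ} (hm : 0 < m) (hmb : m ≤ b) (hbM : b ≤ M)
    (ha : 0 < a) (hab : a ≤ 11 / 10 * b) (hba : b ≤ 11 / 10 * a) (hK : 0 < K)
    (hN : 1 ≤ K * δ) (hbig : 16 * (δ * D ^ 2 + 1 / δ) ≤ K * (m / (1 + M) ^ 2)) :
    (∫ y, (1 + a * y ^ 2) * deriv (fun y' => χ (y' / K) / √(1 + b * y' ^ 2)) y ^ 2)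
      ≤ 9 / 10 * (2 * ∫ y, 2 * a / (1 + a * y ^ 2) * (χ (y / K) / √(1 + b * y ^ 2)) ^ 2) ∧
    0 < ∫ y, 2 * a / (1 + a * y ^ 2) * (χ (y / K) / √(1 + b * y ^ 2)) ^ 2 := by
  have hb : 0 < b := hm.trans_le hmb
  set N := K * δ with hNdef
  have hN0 : 0 < N := by linarith
  have hχc : Continuous χ := hχ.continuous
  set J := ∫ y in Set.Icc (-N) N, b / (1 + b * y ^ 2) ^ 2 with hJ
  have hJ0 := le_integral_core hm hmb hbM hN
  have hJpos : 0 < J := lt_of_lt_of_le (by have := hb.trans_le hbM; positivity) hJ0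
  have hJ1 := integral_core_le hb hN0.le
  rw [← hJ] at hJ0 hJ1
  -- outside `[-2N, 2N]` the cut-off vanishes
  have hout : ∀ y, y ∉ Set.Icc (-(2 * N)) (2 * N) → χ (y / K) = 0 := by
    intro y hy
    by_contra h
    have := hχsupp h
    apply hy
    rw [Set.mem_Icc, le_div_iff₀ hK, div_le_iff₀ hK] at this
    constructor <;> nlinarith
  have c1 : Continuous fun y : ℝ => b ^ 2 * y ^ 2 / (1 + b * y ^ 2) ^ 2 :=
    Continuous.div (by fun_prop) (by fun_prop) fun y => by positivity
  have c2 : Continuous fun y : ℝ => b / (1 + b * y ^ 2) ^ 2 :=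
    Continuous.div (by fun_prop) (by fun_prop) fun y => by positivity
  -- `200/121 = 2/(11/10)²`: one factor for `a` in the numerator, one in the denominator
  have hR : 200 / 121 * J ≤ ∫ y, 2 * a / (1 + a * y ^ 2) * (χ (y / K) / √(1 + b * y ^ 2)) ^ 2 := by
    rw [hJ, ← integral_indicator measurableSet_Icc, ← integral_const_mul]
    refine integral_mono ?_ ?_ ?_
    · exact (c2.continuousOn.integrableOn_Icc.integrable_indicator measurableSet_Icc).const_mul _
    · refine Continuous.integrable_of_hasCompactSupport ?_ ?_
      · refine Continuous.mul (Continuous.div (by fun_prop) (by fun_prop) fun y => by positivity)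
          ((Continuous.div (by fun_prop) (by fun_prop) fun y => ?_).pow 2)
        have : 0 < 1 + b * y ^ 2 := by positivity
        exact (Real.sqrt_pos.2 this).ne'
      · refine HasCompactSupport.intro (K := Set.Icc (-(2 * N)) (2 * N)) isCompact_Icc ?_
        intro y hy
        simp [hout y hy]
    · intro y
      by_cases hy : y ∈ Set.Icc (-N) N
      · have hc : χ (y / K) = 1 := by
          apply hχeq
          rw [Set.mem_Icc, le_div_iff₀ hK, div_le_iff₀ hK]
          constructor <;> nlinarith [hy.1, hy.2]
        have hP : 0 < 1 + b * y ^ 2 := by positivity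
        have hQ : 0 < 1 + a * y ^ 2 := by positivity
        simp only [Set.indicator_of_mem hy, hc]
        rw [div_pow, Real.sq_sqrt hP.le]
        have hq : 1 + a * y ^ 2 ≤ 11 / 10 * (1 + b * y ^ 2) := by
          nlinarith [mul_le_mul_of_nonneg_right hab (sq_nonneg y)]
        calc 200 / 121 * (b / (1 + b * y ^ 2) ^ 2)
            = 2 * (10 / 11 * b) / (11 / 10 * (1 + b * y ^ 2)) * (1 ^ 2 / (1 + b * y ^ 2)) := by
              field_simp; norm_num
          _ ≤ _ := by
              gcongr
              linarith
      · simp only [Set.indicator_of_notMem hy, mul_zero]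
        positivity
  have hL : (∫ y, (1 + a * y ^ 2) * deriv (fun y' => χ (y' / K) / √(1 + b * y' ^ 2)) y ^ 2)
      ≤ 11 / 5 * J + 44 / 5 * N * (D ^ 2 / K ^ 2 + 1 / N ^ 2) := by
    -- majorant: where `|y| > N`, the second term of the pointwise bound is at most `1/y² ≤ 1/N²`
    set B : ℝ → ℝ := fun y =>
      (Set.Icc (-(2 * N)) (2 * N)).indicator (fun _ => 11 / 5 * (D ^ 2 / K ^ 2 + 1 / N ^ 2)) y
      + 11 / 5 * (Set.Icc (-N) N).indicator (fun y => b ^ 2 * y ^ 2 / (1 + b * y ^ 2) ^ 2) y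
      with hB
    have i1 : Integrable ((Set.Icc (-(2 * N)) (2 * N)).indicator
        (fun _ : ℝ => 11 / 5 * (D ^ 2 / K ^ 2 + 1 / N ^ 2))) :=
      (continuousOn_const.integrableOn_Icc).integrable_indicator measurableSet_Icc
    have i2 := ((c1.continuousOn (s := Set.Icc (-N) N)).integrableOn_Icc.integrable_indicator
      measurableSet_Icc (μ := volume)).const_mul (11 / 5)
    have hBint : ∫ y, B y ≤ 11 / 5 * J + 44 / 5 * N * (D ^ 2 / K ^ 2 + 1 / N ^ 2) := by
      rw [hB, integral_add i1 i2, integral_const_mul, integral_indicator measurableSet_Icc,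
        integral_indicator measurableSet_Icc, setIntegral_const, Real.volume_real_Icc_of_le
        (by linarith), smul_eq_mul]
      linarith
    refine le_trans (integral_mono_of_nonneg (Filter.Eventually.of_forall fun y => ?_)
      (i1.add i2) (Filter.Eventually.of_forall fun y => ?_)) hBint
    · simp only [Pi.zero_apply]; positivity
    · by_cases hy : y ∈ Set.Icc (-(2 * N)) (2 * N)
      · refine (profile_deriv_sq_le (hχ.differentiable (by simp)) hχ0 hχ1 hD hb hab hK y).trans ?_
        simp only [Pi.add_apply, Set.indicator_of_mem hy]
        by_cases hy' : y ∈ Set.Icc (-N) N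
        · rw [Set.indicator_of_mem hy']
          have : 0 < 1 / N ^ 2 := by positivity
          linarith
        · rw [Set.indicator_of_notMem hy']
          have hyN : N ^ 2 ≤ y ^ 2 := by
            rw [Set.mem_Icc, ← abs_le, not_le] at hy'
            rw [← sq_abs y]
            gcongr
          have : b ^ 2 * y ^ 2 / (1 + b * y ^ 2) ^ 2 ≤ 1 / N ^ 2 := by
            rw [div_le_div_iff₀ (by positivity) (by positivity)]
            calc b ^ 2 * y ^ 2 * N ^ 2 ≤ b ^ 2 * y ^ 2 * y ^ 2 := by gcongr
              _ ≤ 1 * (1 + b * y ^ 2) ^ 2 := by nlinarith [mul_pos hb (sq_pos_of_pos hN0)]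
          linarith
      · have h0 : deriv (fun y' => χ (y' / K) / √(1 + b * y' ^ 2)) y = 0 := by
          have : (fun y' => χ (y' / K) / √(1 + b * y' ^ 2)) =ᶠ[nhds y] fun _ => 0 := by
            filter_upwards [isClosed_Icc.isOpen_compl.mem_nhds hy] with z hz
            simp [hout z hz]
          rw [this.deriv_eq, deriv_const]
        have hy' : y ∉ Set.Icc (-N) N := fun h => hy ⟨by linarith [h.1], by linarith [h.2]⟩
        simp [Set.indicator_of_notMem hy, Set.indicator_of_notMem hy', h0]
  have herr : 44 / 5 * N * (D ^ 2 / K ^ 2 + 1 / N ^ 2) ≤ 11 / 20 * J := by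
    have e : 44 / 5 * N * (D ^ 2 / K ^ 2 + 1 / N ^ 2)
        = 11 / 20 * (16 * (δ * D ^ 2 + 1 / δ) / K) := by
      rw [hNdef]; field_simp; norm_num
    rw [e]
    gcongr
    rw [div_le_iff₀ hK]
    nlinarith
  constructor <;> linarith

/-! ### Mollification -/

/-- `G_k'(t)` is an average of `G'` over `[t - 1/k, t + 1/k]`, hence as close to `G'(t)` as the
oscillation of `G'` there. As `G` is unrestricted off `U`, differentiation under the integral is
done over the support of the mollifier only, for base points within `δ` of `t`. -/
lemma abs_deriv_Gmol_sub_le {δ : ℝ} {G ρ : ℝ → ℝ}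
    {U : Set ℝ} (hU : IsOpen U) (hUI : Set.Icc (-(4 * δ)) (4 * δ) ⊆ U)
    (hG : ContDiffOn ℝ 2 G U) (hρc : Continuous ρ)
    (hρ0 : ∀ s, 0 ≤ ρ s) (hρsupp : Function.support ρ ⊆ Set.Icc (-1) 1)
    (hρint : ∫ s : ℝ, ρ s = 1) {k : ℕ} (hk : 0 < (k : ℝ)) (hkδ : 1 / (k : ℝ) ≤ δ) {ε t : ℝ}
    (ht : t ∈ Set.Icc (-(2 * δ)) (2 * δ))
    (hε : ∀ s ∈ Set.Icc (-(1 / (k : ℝ))) (1 / k), |deriv G (t - s) - deriv G t| ≤ ε) :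
    |deriv (Gmol G ρ k) t - deriv G t| ≤ ε := by
  have hδ : 0 < δ := lt_of_lt_of_le (by positivity) hkδ
  set S := Set.Icc (-(1 / (k : ℝ))) (1 / k) with hS
  set w : ℝ → ℝ := fun s => (k : ℝ) * ρ ((k : ℝ) * s) with hw
  have hwc : Continuous w := by fun_prop
  have hw0 : ∀ s, 0 ≤ w s := fun s => mul_nonneg hk.le (hρ0 _)
  have hwout : ∀ s ∉ S, w s = 0 := by
    intro s hs
    by_contra h
    have := hρsupp (right_ne_zero_of_mul h)
    apply hs
    rw [hS, Set.mem_Icc, ← neg_div, div_le_iff₀ hk, le_div_iff₀ hk, mul_comm s]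
    exact this
  have hwint : ∫ s in S, w s = 1 := by
    rw [setIntegral_eq_integral_of_forall_compl_eq_zero hwout, hw, integral_const_mul,
      Measure.integral_comp_mul_left, hρint, smul_eq_mul, mul_one, abs_of_pos (by positivity),
      mul_inv_cancel₀ hk.ne']
  have hGm : Gmol G ρ k = fun x => ∫ s in S, w s * G (x - s) := by
    funext x
    rw [setIntegral_eq_integral_of_forall_compl_eq_zero fun s hs => by rw [hwout s hs, zero_mul]]
    rfl
  have hdc : ContinuousOn (deriv G) U := hG.continuousOn_deriv_of_isOpen hU (by norm_num)
  -- for `x` near `t` the translate `x - S` stays inside the interval where `G` is regular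
  have hmem : ∀ x ∈ Metric.ball t δ, ∀ s ∈ S, x - s ∈ Set.Icc (-(4 * δ)) (4 * δ) := by
    intro x hx s hs
    rw [Metric.mem_ball, Real.dist_eq, abs_lt] at hx
    constructor <;> linarith [hx.1, hx.2, hs.1, hs.2, ht.1, ht.2]
  have hcomp : ∀ H : ℝ → ℝ, ContinuousOn H U → ∀ x ∈ Metric.ball t δ,
      ContinuousOn (fun s => w s * H (x - s)) S := fun H hH x hx =>
    hwc.continuousOn.mul (hH.comp (by fun_prop) fun s hs => hUI (hmem x hx s hs))
  obtain ⟨C, hC⟩ := isCompact_Icc.exists_bound_of_continuousOn (hdc.mono hUI)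
  have htb : t ∈ Metric.ball t δ := Metric.mem_ball_self hδ
  have hder := hasDerivAt_integral_of_dominated_loc_of_deriv_le (μ := volume.restrict S)
    (F := fun x s => w s * G (x - s)) (F' := fun x s => w s * deriv G (x - s))
    (bound := fun s => w s * C) (x₀ := t) (Metric.ball_mem_nhds t hδ)
    (by
      filter_upwards [Metric.ball_mem_nhds t hδ] with x hx
      exact (hcomp G hG.continuousOn x hx).aestronglyMeasurable measurableSet_Icc)
    (hcomp G hG.continuousOn t htb).integrableOn_Icc
    ((hcomp _ hdc t htb).aestronglyMeasurable measurableSet_Icc)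
    (by
      filter_upwards [ae_restrict_mem measurableSet_Icc] with s hs x hx
      rw [norm_mul, Real.norm_of_nonneg (hw0 s)]
      exact mul_le_mul_of_nonneg_left (hC _ (hmem x hx s hs)) (hw0 s))
    (hwc.mul continuous_const).continuousOn.integrableOn_Icc
    (by
      filter_upwards [ae_restrict_mem measurableSet_Icc] with s hs x hx
      have hd : DifferentiableAt ℝ G (x - s) :=
        (hG.differentiableOn (by norm_num)).differentiableAt
          (hU.mem_nhds (hUI (hmem x hx s hs)))
      exact (hd.hasDerivAt.comp_sub_const x s).const_mul (w s))
  have e : deriv (Gmol G ρ k) t - deriv G t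
      = ∫ s in S, w s * (deriv G (t - s) - deriv G t) := by
    rw [hGm, hder.2.deriv]
    simp only [mul_sub]
    have hi : Integrable (fun s => w s * deriv G t) (volume.restrict S) :=
      (hwc.mul continuous_const).continuousOn.integrableOn_Icc
    rw [integral_sub hder.1 hi, integral_mul_const, hwint, one_mul]
  rw [e, ← Real.norm_eq_abs]
  calc _ ≤ ∫ s in S, w s * ε := by
        refine norm_integral_le_of_norm_le
          (hwc.mul continuous_const).continuousOn.integrableOn_Icc ?_
        filter_upwards [ae_restrict_mem measurableSet_Icc] with s hs
        rw [norm_mul, Real.norm_of_nonneg (hw0 s)]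
        exact mul_le_mul_of_nonneg_left (hε s hs) (hw0 s)
    _ = ε := by rw [integral_mul_const, hwint, one_mul]

/-! ### Integration in `t` -/

/-- The inner right-hand integral is integrable in `t`: the two-variable integrand is measurable,
bounded by `M`, and supported in a bounded strip. -/
lemma integrableOn_inner_rhs {δ : ℝ} {G χ ρ : ℝ → ℝ}
    (hGc : ContinuousOn G (Set.Ioo (-(4 * δ)) (4 * δ))) (hχc : Continuous χ)
    (hχ0 : ∀ s, 0 ≤ χ s) (hχ1 : ∀ s, χ s ≤ 1)
    (hχsupp : Function.support χ ⊆ Set.Icc (-(2 * δ)) (2 * δ)) {k : ℕ} (hk : 0 < (k : ℝ))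
    (hg : ∀ t ∈ Set.Ioo (-(4 * δ)) (4 * δ), 0 ≤ deriv G t)
    {M : ℝ} (hM0 : 0 ≤ M) (hM : ∀ t, χ t ≠ 0 → deriv G t ≤ M)
    (hgk : ∀ t, χ t ≠ 0 → 0 ≤ deriv (Gmol G ρ k) t) :
    IntegrableOn (fun t => ∫ y : ℝ, deriv G t / ((1 + y ^ 2 / 2 * deriv G t)
      * √(1 + G t ^ 2)) * (fk G χ ρ k y t) ^ 2) (Set.Ioo (-(4 * δ)) (4 * δ)) := by
  set I := Set.Ioo (-(4 * δ)) (4 * δ) with hI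
  have hGm : AEMeasurable G (volume.restrict I) := hGc.aemeasurable measurableSet_Ioo
  refine Integrable.integral_prod_left (μ := volume.restrict I) (ν := volume)
    (f := fun p : ℝ × ℝ => deriv G p.1 / ((1 + p.2 ^ 2 / 2 * deriv G p.1)
      * √(1 + G p.1 ^ 2)) * (fk G χ ρ k p.2 p.1) ^ 2) ?_
  have hmeas : AEStronglyMeasurable (fun p : ℝ × ℝ => deriv G p.1 / ((1 + p.2 ^ 2 / 2 * deriv G p.1)
      * √(1 + G p.1 ^ 2)) * (fk G χ ρ k p.2 p.1) ^ 2)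
      ((volume.restrict I).prod volume) := by
    have h1 : AEMeasurable (fun p : ℝ × ℝ => G p.1) ((volume.restrict I).prod volume) :=
      hGm.comp_fst
    have h2 : Measurable fun p : ℝ × ℝ => deriv G p.1 := (measurable_deriv G).comp measurable_fst
    have h3 : Measurable fun p : ℝ × ℝ => deriv (Gmol G ρ k) p.1 :=
      (measurable_deriv _).comp measurable_fst
    have h4 : Measurable χ := hχc.measurable
    unfold fk
    refine AEMeasurable.aestronglyMeasurable ?_
    refine AEMeasurable.mul (h2.aemeasurable.div (AEMeasurable.mul ?_ ?_))
      (Measurable.aemeasurable ?_)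
    · exact Measurable.aemeasurable (by fun_prop)
    · exact ((h1.pow_const 2).const_add 1).sqrt
    · exact Measurable.pow_const (by fun_prop) 2
  set N := 2 * δ * k with hN
  have hbd : Integrable ((Set.univ ×ˢ Set.Icc (-N) N : Set (ℝ × ℝ)).indicator fun _ => M)
      ((volume.restrict I).prod volume) := by
    rw [integrable_indicator_iff (MeasurableSet.univ.prod measurableSet_Icc)]
    refine integrableOn_const ?_
    rw [Measure.prod_prod]
    simp only [Measure.restrict_apply_univ, hI, Real.volume_Ioo, Real.volume_Icc]
    exact ENNReal.mul_ne_top ENNReal.ofReal_ne_top ENNReal.ofReal_ne_top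
  refine hbd.mono' hmeas ?_
  have hae : ∀ᵐ p : ℝ × ℝ ∂((volume.restrict I).prod volume), p.1 ∈ I :=
    Measure.quasiMeasurePreserving_fst.ae (ae_restrict_mem measurableSet_Ioo)
  filter_upwards [hae] with p hp
  by_cases hχt : χ p.1 = 0
  · have : fk G χ ρ k p.2 p.1 = 0 := by simp [fk, hχt]
    rw [this, zero_pow two_ne_zero, mul_zero, norm_zero]
    exact Set.indicator_nonneg (fun _ _ => hM0) p
  by_cases hy : p.2 ∈ Set.Icc (-N) N
  · rw [Set.indicator_of_mem (by simpa using hy)]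
    have hg0 := hg _ hp
    have hb := hgk _ hχt
    have hP : 1 ≤ 1 + p.2 ^ 2 / 2 * deriv G p.1 := by
      have : 0 ≤ p.2 ^ 2 / 2 * deriv G p.1 := by positivity
      linarith
    have hQ : 1 ≤ √(1 + p.2 ^ 2 / 2 * deriv (Gmol G ρ k) p.1) := by
      rw [Real.one_le_sqrt]
      have : 0 ≤ p.2 ^ 2 / 2 * deriv (Gmol G ρ k) p.1 := by positivity
      linarith
    have hW : 1 ≤ √(1 + G p.1 ^ 2) := by
      rw [Real.one_le_sqrt]
      nlinarith [sq_nonneg (G p.1)]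
    have hf0 : 0 ≤ fk G χ ρ k p.2 p.1 := by
      unfold fk
      have := hχ0 p.1
      have := hχ0 (p.2 / k)
      positivity
    have hf1 : fk G χ ρ k p.2 p.1 ≤ 1 := by
      unfold fk
      rw [div_le_one (by linarith)]
      exact (mul_le_one₀ (hχ1 _) (hχ0 _) (hχ1 _)).trans hQ
    rw [Real.norm_of_nonneg (by positivity)]
    calc _ ≤ deriv G p.1 / 1 * 1 := by
          gcongr
          · nlinarith
          · exact pow_le_one₀ hf0 hf1
      _ ≤ M := by simpa using hM _ hχt
  · have h0 : χ (p.2 / k) = 0 := by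
      by_contra h
      have := hχsupp h
      apply hy
      rw [Set.mem_Icc, le_div_iff₀ hk, div_le_iff₀ hk] at this
      constructor <;> linarith [this.1, this.2]
    rw [Set.indicator_of_notMem (by simpa using hy)]
    simp [fk, h0]

/-- the reverse Poincaré-type inequality for strict graphical strips: there is
`k₀` such that for all `k > k₀`,
`∫∫_{ℝ×I_δ} (1+(y²/2)G')/√(1+G²)·(∂f_k/∂y)² < 2∫∫_{ℝ×I_δ} G'/((1+(y²/2)G')√(1+G²))·f_k²`. -/
theorem stmt8 (δ : ℝ) (hδ : 0 < δ) (G χ ρ : ℝ → ℝ)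
    (U : Set ℝ) (hU : IsOpen U) (hUc : U.OrdConnected)
    (hUI : Set.Icc (-(4 * δ)) (4 * δ) ⊆ U)
    (hG : ContDiffOn ℝ 2 G U)
    (hG' : ∀ t ∈ Set.Ioo (-(4 * δ)) (4 * δ), 0 < deriv G t)
    (hχs : ContDiff ℝ (⊤ : ℕ∞) χ) (hχc : HasCompactSupport χ)
    (hχ0 : ∀ s, 0 ≤ χ s) (hχ1 : ∀ s, χ s ≤ 1)
    (hχeq : ∀ s ∈ Set.Icc (-δ) δ, χ s = 1)
    (hχsupp : Function.support χ ⊆ Set.Icc (-(2 * δ)) (2 * δ))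
    (hρs : ContDiff ℝ (⊤ : ℕ∞) ρ) (hρc : HasCompactSupport ρ)
    (hρ0 : ∀ s, 0 ≤ ρ s) (hρsupp : Function.support ρ ⊆ Set.Icc (-1) 1)
    (hρint : ∫ s : ℝ, ρ s = 1) :
    ∃ k₀ : ℕ, ∀ k : ℕ, k₀ < k →
      (∫ t in Set.Ioo (-(4 * δ)) (4 * δ), ∫ y : ℝ,
          (1 + y ^ 2 / 2 * deriv G t) / Real.sqrt (1 + G t ^ 2)
            * (deriv (fun y' => fk G χ ρ k y' t) y) ^ 2)
        < 2 * ∫ t in Set.Ioo (-(4 * δ)) (4 * δ), ∫ y : ℝ,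
            deriv G t / ((1 + y ^ 2 / 2 * deriv G t) * Real.sqrt (1 + G t ^ 2))
              * (fk G χ ρ k y t) ^ 2 := by
  set I := Set.Ioo (-(4 * δ)) (4 * δ) with hI
  set T := Set.Icc (-(2 * δ)) (2 * δ) with hT
  have hTI : T ⊆ I := fun t ht => ⟨by linarith [ht.1], by linarith [ht.2]⟩
  have hdc : ContinuousOn (deriv G) (Set.Icc (-(4 * δ)) (4 * δ)) :=
    (hG.continuousOn_deriv_of_isOpen hU (by norm_num)).mono hUI
  have hGc : ContinuousOn G I := hG.continuousOn.mono (Set.Ioo_subset_Icc_self.trans hUI)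
  have hdcT : ContinuousOn (deriv G) T := hdc.mono (hTI.trans Set.Ioo_subset_Icc_self)
  have hTne : T.Nonempty := ⟨0, by constructor <;> linarith⟩
  obtain ⟨t₁, ht₁, hmin⟩ := isCompact_Icc.exists_isMinOn hTne hdcT
  obtain ⟨t₂, ht₂, hmax⟩ := isCompact_Icc.exists_isMaxOn hTne hdcT
  set m := deriv G t₁
  set M := deriv G t₂
  have hm : 0 < m := hG' _ (hTI ht₁)
  have hmT : ∀ t ∈ T, m ≤ deriv G t := fun t ht => hmin ht
  have hMT : ∀ t ∈ T, deriv G t ≤ M := fun t ht => hmax ht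
  have hM : 0 < M := hG' _ (hTI ht₂)
  obtain ⟨D, hD⟩ := (hχs.continuous_deriv (by simp)).bounded_above_of_compact_support hχc.deriv
  obtain ⟨η, hη, hηG⟩ := Metric.uniformContinuousOn_iff.1
    (isCompact_Icc.uniformContinuousOn_of_continuous hdc) (m / 12) (by positivity)
  -- `1/δ` keeps translates inside `I_δ`, `1/η` makes `G_k'` close to `G'`, and the last term is
  -- the threshold in `line_estimate`, where `b ≥ m/4`
  obtain ⟨k₀, hk₀⟩ := exists_nat_gt (max (max (1 / δ) (1 / η))
    (16 * (δ * D ^ 2 + 1 / δ) / (m / 4 / (1 + M) ^ 2)))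
  refine ⟨k₀, fun k hkk => ?_⟩
  have hkbig := hk₀.trans (Nat.cast_lt.2 hkk : (k₀ : ℝ) < k)
  rw [max_lt_iff, max_lt_iff] at hkbig
  obtain ⟨⟨hkδ, hkη⟩, hkJ⟩ := hkbig
  have hk : 0 < (k : ℝ) := lt_trans (by positivity) hkδ
  have hkδ' : 1 / (k : ℝ) < δ := by rwa [one_div_lt hk hδ]
  have hkη' : 1 / (k : ℝ) < η := by rwa [one_div_lt hk hη]
  have hgk : ∀ t ∈ T, |deriv (Gmol G ρ k) t - deriv G t| ≤ m / 12 := by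
    intro t ht
    refine abs_deriv_Gmol_sub_le hU hUI hG hρs.continuous hρ0 hρsupp hρint hk hkδ'.le ht ?_
    intro s hs
    refine (hηG _ ?_ _ ?_ ?_).le
    · constructor <;> linarith [hs.1, hs.2, ht.1, ht.2]
    · constructor <;> linarith [ht.1, ht.2]
    · rw [Real.dist_eq, sub_sub_cancel_left, abs_neg]
      exact (abs_le.2 hs).trans_lt hkη'
  have hfk : ∀ y t, fk G χ ρ k y t
      = χ t * (χ (y / k) / √(1 + deriv (Gmol G ρ k) t / 2 * y ^ 2)) := by
    intro y t
    rw [fk, show y ^ 2 / 2 * deriv (Gmol G ρ k) t = deriv (Gmol G ρ k) t / 2 * y ^ 2 by ring]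
    ring
  set L : ℝ → ℝ := fun t => ∫ y : ℝ, (1 + y ^ 2 / 2 * deriv G t) / √(1 + G t ^ 2)
    * (deriv (fun y' => fk G χ ρ k y' t) y) ^ 2 with hL
  set R : ℝ → ℝ := fun t => ∫ y : ℝ, deriv G t / ((1 + y ^ 2 / 2 * deriv G t) * √(1 + G t ^ 2))
    * (fk G χ ρ k y t) ^ 2 with hR
  have hχT : ∀ t, χ t ≠ 0 → t ∈ T := fun t ht => hχsupp ht
  have key : ∀ t, χ t ≠ 0 → L t ≤ 9 / 10 * (2 * R t) ∧ 0 < R t := by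
    intro t hχt
    have ht := hχT t hχt
    have h1 := hmT t ht
    have h2 := hMT t ht
    obtain ⟨h3, h4⟩ := abs_le.1 (hgk t ht)
    have hc : 0 < χ t ^ 2 / √(1 + G t ^ 2) :=
      div_pos (by positivity) (Real.sqrt_pos.2 (by positivity))
    obtain ⟨e1, e2⟩ := line_estimate hχs hδ hχ0 hχ1 hχeq hχsupp hD
      (a := deriv G t / 2) (b := deriv (Gmol G ρ k) t / 2) (K := k) (m := m / 4) (M := M)
      (by positivity) (by linarith) (by linarith) (by linarith) (by linarith) (by linarith) hk
      (by rw [div_lt_iff₀ hδ] at hkδ; exact hkδ.le)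
      (by rw [div_lt_iff₀ (by positivity)] at hkJ; exact hkJ.le)
    have hLt : L t = χ t ^ 2 / √(1 + G t ^ 2) * ∫ y, (1 + deriv G t / 2 * y ^ 2)
        * deriv (fun y' => χ (y' / k) / √(1 + deriv (Gmol G ρ k) t / 2 * y' ^ 2)) y ^ 2 := by
      rw [hL, ← integral_const_mul]
      refine integral_congr_ae (Filter.Eventually.of_forall fun y => ?_)
      simp only [hfk, deriv_const_mul_field']
      ring
    have hRt : R t = χ t ^ 2 / √(1 + G t ^ 2) * ∫ y, 2 * (deriv G t / 2)
        / (1 + deriv G t / 2 * y ^ 2)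
        * (χ (y / k) / √(1 + deriv (Gmol G ρ k) t / 2 * y ^ 2)) ^ 2 := by
      rw [hR, ← integral_const_mul]
      refine integral_congr_ae (Filter.Eventually.of_forall fun y => ?_)
      simp only [hfk]
      rw [show 1 + y ^ 2 / 2 * deriv G t = 1 + deriv G t / 2 * y ^ 2 by ring]
      simp only [div_eq_mul_inv, mul_inv]
      ring
    rw [hLt, hRt]
    refine ⟨?_, mul_pos hc e2⟩
    have := mul_le_mul_of_nonneg_left e1 hc.le
    linarith
  have key0 : ∀ t, χ t = 0 → L t = 0 ∧ R t = 0 := by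
    intro t hχt
    have hz : ∀ y, fk G χ ρ k y t = 0 := fun y => by simp [fk, hχt]
    simp [hL, hR, hz]
  have hRint : IntegrableOn R I :=
    integrableOn_inner_rhs hGc hχs.continuous hχ0 hχ1 hχsupp hk (fun t ht => (hG' t ht).le)
      hM.le (fun t ht => hMT t (hχT t ht))
      (fun t ht => by linarith [(abs_le.1 (hgk t (hχT t ht))).1, hmT t (hχT t ht)])
  have hR0 : ∀ t, 0 ≤ R t := fun t => by
    by_cases h : χ t = 0
    · exact (key0 t h).2.ge
    · exact (key t h).2.le
  have hLR : ∀ t, L t ≤ 9 / 10 * (2 * R t) := fun t => by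
    by_cases h : χ t = 0
    · simp [key0 t h]
    · exact (key t h).1
  have hRpos : 0 < ∫ t in I, R t := by
    rw [setIntegral_pos_iff_support_of_nonneg_ae (Filter.Eventually.of_forall hR0) hRint]
    refine lt_of_lt_of_le ?_ (measure_mono (s := Set.Ioo (-δ) δ) fun t ht => ⟨?_, ?_⟩)
    · rw [Real.volume_Ioo, ENNReal.ofReal_pos]
      linarith
    · have : χ t ≠ 0 := by rw [hχeq t ⟨ht.1.le, ht.2.le⟩]; exact one_ne_zero
      exact (key t this).2.ne'
    · constructor <;> linarith [ht.1, ht.2]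
  -- `L` need not be known to be integrable: it is nonnegative and dominated by `R`
  have hL0 : ∀ t ∈ I, 0 ≤ L t := by
    intro t ht
    have := hG' t ht
    exact integral_nonneg fun y => by simp only [Pi.zero_apply]; positivity
  calc ∫ t in I, L t ≤ ∫ t in I, 9 / 10 * (2 * R t) :=
        integral_mono_of_nonneg (ae_restrict_of_forall_mem measurableSet_Ioo hL0)
          ((hRint.const_mul 2).const_mul (9 / 10)) (Filter.Eventually.of_forall hLR)
    _ = 9 / 10 * (2 * ∫ t in I, R t) := by rw [integral_const_mul, integral_const_mul]
    _ < 2 * ∫ t in I, R t := by linarith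
end

section
/- Let I ⊆ ℝ be an open interval and G : I → ℝ a C² function with G' ≥ 0 on I, and suppose there is a nonempty open subinterval J ⊆ I with G'(t) > 0 for all t ∈ J. Then there exists a smooth, compactly supported, not identically zero function u : ℝ×I → ℝ such that ∫∫_{ℝ×I} [(1 + (y²/2)G'(t))/(1+G(t)²)^{1/2}]·(∂u/∂y)² dy dt < 2·∫∫_{ℝ×I} [G'(t)/((1 + (y²/2)G'(t))·(1+G(t)²)^{1/2})]·u(y,t)² dy dt. -/
/-! Fix `t₀ ∈ J`, put `c = G'(t₀) / 2 > 0` and `p(y) = 1 + c y²`. For fixed `t₀` the one-dimensional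
problem is governed by the operator `-(p f')'` with weight `c / p`; after `√c y = tan θ` it is the
Dirichlet problem on `(-π/2, π/2)`, whose first eigenfunction `cos θ = p^(-1/2)` has eigenvalue `1`,
whereas negativity of the second variation only requires an eigenvalue below `4`.
With `φ = η p^(-1/2)` for a cutoff `η`, an exact differential splits off:
`p φ'² = η'² + c η² / p² - (c y η² / p)'`. So `∫ p φ'² = ∫ η'² + M` and
`2 ∫ (2c) φ² / p = 4 M`, where `M = ∫ c η² / p²` (`exists_profile`). Stretching `η`
makes its Dirichlet energy at most `M` (`exists_cutoff`), which leaves a factor `2` to spare.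

Since `G` is only `C²`, a profile depending on `G'(t)` would not be smooth in `t`. Instead the
profile at `t₀` is kept fixed and multiplied by a bump `ψ(t)` supported where `G'(t)` is within a
quarter of `G'(t₀)`; this costs at most the factors `5/4` and `3/4` (`perturbed_bounds`), and
`2 · 5/4 < 4 · 3/4`.
-/

open MeasureTheory

/-- There are cutoffs equal to `1` on `[-1, 1]` with arbitrarily small Dirichlet energy, since
the energy of `x ↦ b (x / R)` is `R⁻¹` times that of `b`. -/
lemma exists_cutoff (ε : ℝ) (hε : 0 < ε) :
    ∃ η : ℝ → ℝ, ContDiff ℝ (⊤ : ℕ∞) η ∧ HasCompactSupport η ∧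
      (∀ x ∈ Set.Icc (-1 : ℝ) 1, η x = 1) ∧ ∫ x, (deriv η x) ^ 2 ≤ ε := by
  let b : ContDiffBump (0 : ℝ) := ⟨1, 2, one_pos, one_lt_two⟩
  set K := ∫ x, (deriv b x) ^ 2 with hK
  have hK0 : 0 ≤ K := integral_nonneg fun x => sq_nonneg _
  set R : ℝ := max 1 (K / ε) with hR
  have hR1 : 1 ≤ R := le_max_left _ _
  have hR2 : K / ε ≤ R := le_max_right _ _
  have hR0 : 0 < R := by linarith
  refine ⟨fun x => b (R⁻¹ * x), b.contDiff.comp (contDiff_const.mul contDiff_id), ?_, ?_, ?_⟩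
  · exact b.hasCompactSupport.comp_homeomorph (Homeomorph.mulLeft₀ R⁻¹ (by positivity))
  · intro x hx
    apply b.one_of_mem_closedBall
    rw [mem_closedBall_zero_iff, Real.norm_eq_abs, abs_mul, abs_of_pos (inv_pos.2 hR0)]
    have h1 : |x| ≤ 1 := abs_le.2 hx
    have h2 : R⁻¹ ≤ 1 := inv_le_one_of_one_le₀ hR1
    change R⁻¹ * |x| ≤ 1
    nlinarith [abs_nonneg x, inv_pos.2 hR0]
  · have hd : ∀ x, deriv (fun x => b (R⁻¹ * x)) x = R⁻¹ * deriv b (R⁻¹ * x) := fun x => by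
      have := deriv_comp_mul_left R⁻¹ (b : ℝ → ℝ) x
      simpa using this
    simp_rw [hd, mul_pow]
    rw [integral_const_mul,
      Measure.integral_comp_mul_left (fun x => (deriv b x) ^ 2) R⁻¹, ← hK, inv_inv,
      abs_of_pos hR0, smul_eq_mul]
    have : R⁻¹ ^ 2 * (R * K) = K / R := by field_simp
    rw [this, div_le_iff₀ hR0]
    rw [div_le_iff₀ hε] at hR2
    linarith

lemma integrable_mul_sq {w f : ℝ → ℝ} (hw : Continuous w) (hf : Continuous f)
    (hs : HasCompactSupport f) : Integrable fun y => w y * f y ^ 2 := by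
  refine (hw.mul (hf.pow 2)).integrable_of_hasCompactSupport ?_
  refine HasCompactSupport.mul_left (f := w) ?_
  simpa only [sq] using hs.mul_left (f := f)

/-- The profile `η p^(-1/2)` and the comparison constant `M = ∫ c η² / p²`, for `p = 1 + c y²`. -/
lemma exists_profile (c : ℝ) (hc : 0 < c) :
    ∃ (φ : ℝ → ℝ) (M : ℝ), 0 < M ∧ ContDiff ℝ (⊤ : ℕ∞) φ ∧ HasCompactSupport φ ∧ φ 0 = 1 ∧
      ∫ y, (1 + c * y ^ 2) * (deriv φ y) ^ 2 ≤ 2 * M ∧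
      M = ∫ y, c / (1 + c * y ^ 2) * φ y ^ 2 := by
  have hp : ∀ y : ℝ, 0 < 1 + c * y ^ 2 := fun y => by positivity
  obtain ⟨η, hη, hηs, hη1, hηE⟩ := exists_cutoff (2 * (c / (1 + c) ^ 2)) (by positivity)
  have hηd : ∀ y, HasDerivAt η (deriv η y) y := fun y =>
    (hη.differentiable (by simp) y).hasDerivAt
  have hηc : Continuous (deriv η) := hη.continuous_deriv (by simp)
  have hpc : Continuous fun y : ℝ => 1 + c * y ^ 2 := by fun_prop
  set φ : ℝ → ℝ := fun y => η y * (√(1 + c * y ^ 2))⁻¹ with hφ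
  set M : ℝ := ∫ y, c / (1 + c * y ^ 2) ^ 2 * η y ^ 2 with hM
  have hMi : Integrable fun y => c / (1 + c * y ^ 2) ^ 2 * η y ^ 2 :=
    integrable_mul_sq (continuous_const.div (hpc.pow 2) fun y => (pow_pos (hp y) 2).ne')
      hη.continuous hηs
  -- On `[-1, 1]` the integrand of `M` is at least `c / (1 + c)²`.
  have hMlow : 2 * (c / (1 + c) ^ 2) ≤ M := by
    have h1 : ∫ y in Set.Icc (-1 : ℝ) 1, c / (1 + c) ^ 2 ≤
        ∫ y in Set.Icc (-1 : ℝ) 1, c / (1 + c * y ^ 2) ^ 2 * η y ^ 2 := by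
      refine setIntegral_mono_on (by simp) hMi.integrableOn measurableSet_Icc fun y hy => ?_
      rw [hη1 y hy, one_pow, mul_one]
      have h0 := hp y
      have : 1 + c * y ^ 2 ≤ 1 + c := by
        have : y ^ 2 ≤ 1 := by nlinarith [hy.1, hy.2]
        nlinarith
      gcongr
    have h2 := setIntegral_le_integral (s := Set.Icc (-1 : ℝ) 1) hMi
      (Filter.Eventually.of_forall fun y => by positivity)
    have h3 : ∫ y in Set.Icc (-1 : ℝ) 1, c / (1 + c) ^ 2 = 2 * (c / (1 + c) ^ 2) := by
      rw [setIntegral_const]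
      norm_num [Measure.real]
    linarith
  have hφsm : ContDiff ℝ (⊤ : ℕ∞) φ := by
    refine hη.mul (ContDiff.inv (ContDiff.sqrt (by fun_prop) fun y => (hp y).ne') fun y => ?_)
    exact (Real.sqrt_pos.2 (hp y)).ne'
  have hφs : HasCompactSupport φ := hηs.mul_right
  set q : ℝ → ℝ := fun y => η y ^ 2 * (c * y / (1 + c * y ^ 2)) with hq
  have hpd : ∀ y, HasDerivAt (fun y : ℝ => 1 + c * y ^ 2) (c * (2 * y)) y := fun y => by
    simpa using ((hasDerivAt_pow 2 y).const_mul c).const_add 1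
  have hqd : ∀ y, HasDerivAt q (2 * η y * deriv η y * (c * y / (1 + c * y ^ 2))
      + η y ^ 2 * (c * (1 - c * y ^ 2) / (1 + c * y ^ 2) ^ 2)) y := fun y => by
    have h1 : HasDerivAt (fun y : ℝ => c * y) c y := by simpa using (hasDerivAt_id y).const_mul c
    have h2 := ((hηd y).pow 2).mul (h1.div (hpd y) (hp y).ne')
    refine h2.congr_deriv ?_
    simp only [Pi.pow_apply, Pi.div_apply]
    push_cast
    ring
  have hqs : HasCompactSupport q := by
    have h : HasCompactSupport fun y => η y ^ 2 := hηs.comp_left (g := fun x => x ^ 2) (by simp)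
    exact h.mul_right
  have hqsm : ContDiff ℝ 1 q :=
    ((hη.of_le (by simp)).pow 2).mul (ContDiff.div (by fun_prop) (by fun_prop) fun y => (hp y).ne')
  have hqi : ∫ y, deriv q y = 0 :=
    integral_eq_zero_of_hasDerivAt_of_integrable
      (fun y => (hqsm.differentiable (by simp) y).hasDerivAt)
      ((hqsm.continuous_deriv (by simp)).integrable_of_hasCompactSupport hqs.deriv)
      (hqsm.continuous.integrable_of_hasCompactSupport hqs)
  have hφd : ∀ y, deriv φ y = deriv η y * (√(1 + c * y ^ 2))⁻¹
      - η y * (c * y) * (√(1 + c * y ^ 2))⁻¹ ^ 3 := fun y => by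
    have hs := Real.sqrt_pos.2 (hp y)
    have h2 := (hηd y).mul (((hpd y).sqrt (hp y).ne').inv hs.ne')
    refine h2.deriv.trans ?_
    simp only [Pi.inv_apply]
    field_simp
    ring
  have hid : ∀ y, (1 + c * y ^ 2) * (deriv φ y) ^ 2
      = (deriv η y) ^ 2 + c / (1 + c * y ^ 2) ^ 2 * η y ^ 2 - deriv q y := fun y => by
    rw [hφd, (hqd y).deriv]
    have hs := Real.sqrt_pos.2 (hp y)
    have hss : √(1 + c * y ^ 2) ^ 2 = 1 + c * y ^ 2 := Real.sq_sqrt (hp y).le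
    set s := √(1 + c * y ^ 2)
    rw [← hss]
    field_simp
    ring
  refine ⟨φ, M, lt_of_lt_of_le (by positivity) hMlow, hφsm, hφs, ?_, ?_, ?_⟩
  · simp [hφ, hη1 0 (by simp)]
  · simp_rw [hid]
    have hi1 : Integrable fun y => (deriv η y) ^ 2 := by
      simpa using integrable_mul_sq (w := fun _ => 1) continuous_const hηc hηs.deriv
    have h3 := integral_sub (hi1.add hMi)
      ((hqsm.continuous_deriv (by simp)).integrable_of_hasCompactSupport hqs.deriv)
    have h4 := integral_add hi1 hMi
    simp only [Pi.add_apply] at h3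
    rw [h3, h4, hqi]
    linarith
  · refine integral_congr_ae (Filter.Eventually.of_forall fun y => ?_)
    simp only [hφ, mul_pow, inv_pow, Real.sq_sqrt (hp y).le]
    have := hp y
    field_simp

/-- For `a` within a quarter of `2c`, the two weights `1 + a y²/2` and `a / (1 + a y²/2)` change
by at most the factors `5/4` and `3/4`, the second because it is increasing in `a`. The last bound
serves as a domination in `t`. -/
lemma perturbed_bounds {c M a : ℝ} {φ : ℝ → ℝ} (hc : 0 < c)
    (hφ : ContDiff ℝ (⊤ : ℕ∞) φ) (hs : HasCompactSupport φ)
    (h1 : ∫ y, (1 + c * y ^ 2) * (deriv φ y) ^ 2 ≤ 2 * M)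
    (h2 : M = ∫ y, c / (1 + c * y ^ 2) * φ y ^ 2)
    (ha1 : 3 / 2 * c ≤ a) (ha2 : a ≤ 5 / 2 * c) :
    ∫ y, (1 + y ^ 2 / 2 * a) * (deriv φ y) ^ 2 ≤ 5 / 2 * M ∧
    3 / 2 * M ≤ ∫ y, a / (1 + y ^ 2 / 2 * a) * φ y ^ 2 ∧
    ∫ y, a / (1 + y ^ 2 / 2 * a) * φ y ^ 2 ≤ 5 / 2 * c * ∫ y, φ y ^ 2 := by
  have ha : 0 < a := by linarith
  have hp : ∀ y : ℝ, 0 < 1 + c * y ^ 2 := fun y => by positivity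
  have hpa : ∀ y : ℝ, 0 < 1 + y ^ 2 / 2 * a := fun y => by positivity
  have hd : Continuous (deriv φ) := hφ.continuous_deriv (by simp)
  have hi : Integrable fun y => a / (1 + y ^ 2 / 2 * a) * φ y ^ 2 :=
    integrable_mul_sq (continuous_const.div (by fun_prop) fun y => (hpa y).ne') hφ.continuous hs
  refine ⟨?_, ?_, ?_⟩
  · calc ∫ y, (1 + y ^ 2 / 2 * a) * (deriv φ y) ^ 2
        ≤ ∫ y, 5 / 4 * ((1 + c * y ^ 2) * (deriv φ y) ^ 2) := by
          refine integral_mono (integrable_mul_sq (by fun_prop) hd hs.deriv)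
            ((integrable_mul_sq (by fun_prop) hd hs.deriv).const_mul _) fun y => ?_
          simp only
          rw [← mul_assoc]
          refine mul_le_mul_of_nonneg_right ?_ (sq_nonneg _)
          nlinarith [sq_nonneg y]
      _ ≤ 5 / 2 * M := by rw [integral_const_mul]; linarith
  · calc 3 / 2 * M = ∫ y, 3 / 2 * (c / (1 + c * y ^ 2) * φ y ^ 2) := by
          rw [integral_const_mul, ← h2]
      _ ≤ _ := by
          refine integral_mono (Integrable.const_mul (integrable_mul_sq
            (continuous_const.div (by fun_prop) fun y => (hp y).ne') hφ.continuous hs) _) hi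
            fun y => ?_
          simp only
          rw [← mul_assoc]
          refine mul_le_mul_of_nonneg_right ?_ (sq_nonneg _)
          rw [← mul_div_assoc, div_le_div_iff₀ (hp y) (hpa y)]
          nlinarith [mul_nonneg (mul_nonneg hc.le ha.le) (sq_nonneg y)]
  · rw [← integral_const_mul]
    refine integral_mono hi (integrable_mul_sq continuous_const hφ.continuous hs) fun y => ?_
    refine mul_le_mul_of_nonneg_right ?_ (sq_nonneg _)
    refine (div_le_self ha.le ?_).trans ha2
    nlinarith [mul_nonneg (sq_nonneg y) ha.le]

open MeasureTheory

/-- instability of strict graphical strips. If `G' ≥ 0` on the open interval `I`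
and `G' > 0` on some nonempty open subinterval `J ⊆ I`, then there exists a smooth, compactly
supported, not identically zero `u` supported in `ℝ×I` making the second variation of the
H-perimeter negative:
`∫∫ (1+(y²/2)G')/√(1+G²)·u_y² < 2∫∫ G'/((1+(y²/2)G')√(1+G²))·u²`. -/
theorem stmt9 (I : Set ℝ) (hIo : IsOpen I) (hIc : I.OrdConnected)
    (G : ℝ → ℝ) (hG : ContDiffOn ℝ 2 G I) (hG' : ∀ t ∈ I, 0 ≤ deriv G t)
    (J : Set ℝ) (hJI : J ⊆ I) (hJo : IsOpen J) (hJc : J.OrdConnected)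
    (hJne : J.Nonempty) (hGJ : ∀ t ∈ J, 0 < deriv G t) :
    ∃ u : ℝ × ℝ → ℝ,
      ContDiff ℝ (⊤ : ℕ∞) u ∧ HasCompactSupport u ∧
      tsupport u ⊆ (Set.univ ×ˢ I : Set (ℝ × ℝ)) ∧ u ≠ 0 ∧
      (∫ t in I, ∫ y : ℝ,
          (1 + y ^ 2 / 2 * deriv G t) / Real.sqrt (1 + G t ^ 2)
            * (deriv (fun y' => u (y', t)) y) ^ 2)
        < 2 * ∫ t in I, ∫ y : ℝ,
            deriv G t / ((1 + y ^ 2 / 2 * deriv G t) * Real.sqrt (1 + G t ^ 2))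
              * (u (y, t)) ^ 2 := by
  obtain ⟨t₀, ht₀⟩ := hJne
  obtain ⟨c, hc2⟩ : ∃ c, c = deriv G t₀ / 2 := ⟨_, rfl⟩
  have hc : 0 < c := by have := hGJ t₀ ht₀; linarith
  obtain ⟨φ, M, hM, hφ, hφs, hφ0, h1, h2⟩ := exists_profile c hc
  have hcont : ContinuousAt (deriv G) t₀ :=
    (hG.continuousOn_deriv_of_isOpen hIo (by norm_num)).continuousAt
      (hIo.mem_nhds (hJI ht₀))
  have hev : ∀ᶠ t in nhds t₀, t ∈ I ∧ 3 / 2 * c < deriv G t ∧ deriv G t < 5 / 2 * c :=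
    Filter.Eventually.and (hIo.mem_nhds (hJI ht₀)) ((hcont.eventually (lt_mem_nhds (by linarith))).and
      (hcont.eventually (gt_mem_nhds (by linarith))))
  obtain ⟨r, hr, hball⟩ := Metric.eventually_nhds_iff_ball.1 hev
  let ψ : ContDiffBump t₀ := ⟨r / 3, r / 2, by positivity, by linarith⟩
  have hψt : tsupport ψ ⊆ Metric.ball t₀ r := by
    rw [ψ.tsupport_eq]
    exact Metric.closedBall_subset_ball (by change r / 2 < r; linarith)
  have hψ : ∀ t, ψ t ≠ 0 → t ∈ Metric.ball t₀ r := fun t ht => hψt (subset_tsupport _ ht)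
  set u : ℝ × ℝ → ℝ := fun x => φ x.1 * ψ x.2 with hu
  have hts : tsupport u ⊆ tsupport φ ×ˢ tsupport ψ := by
    refine closure_minimal (fun x hx => ?_) ((isClosed_tsupport _).prod (isClosed_tsupport _))
    exact ⟨subset_tsupport _ (left_ne_zero_of_mul hx), subset_tsupport _ (right_ne_zero_of_mul hx)⟩
  have hsq : ∀ t, 0 < √(1 + G t ^ 2) := fun t => Real.sqrt_pos.2 (by positivity)
  -- The weight in `t` common to both sides.
  set g : ℝ → ℝ := fun t => ψ t ^ 2 / √(1 + G t ^ 2) with hg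
  have hg0 : ∀ t, 0 ≤ g t := fun t => by positivity
  have hgc : ContinuousOn g I :=
    (ψ.continuous.pow 2).continuousOn.div
      (((continuousOn_const.add (hG.continuousOn.pow 2))).sqrt) fun t _ => (hsq t).ne'
  have hgm : AEStronglyMeasurable g (volume.restrict I) :=
    hgc.aestronglyMeasurable hIo.measurableSet
  have hψi : Integrable fun t => ψ t ^ 2 := by
    simpa using integrable_mul_sq (w := fun _ => 1) continuous_const ψ.continuous
      ψ.hasCompactSupport
  have hgi : IntegrableOn g I := by
    refine hψi.integrableOn.mono' hgm (Filter.Eventually.of_forall fun t => ?_)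
    rw [Real.norm_of_nonneg (hg0 t)]
    refine div_le_self (sq_nonneg _) (Real.one_le_sqrt.2 ?_)
    nlinarith [sq_nonneg (G t)]
  have hgpos : 0 < ∫ t in I, g t := by
    rw [setIntegral_pos_iff_support_of_nonneg_ae (Filter.Eventually.of_forall hg0) hgi]
    refine lt_of_lt_of_le (Metric.measure_ball_pos volume t₀ (show 0 < r / 3 by positivity))
      (measure_mono fun t ht => ⟨?_, (hball t (Metric.ball_subset_ball (by linarith) ht)).1⟩)
    have : ψ t = 1 := ψ.one_of_mem_closedBall (Metric.ball_subset_closedBall ht)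
    simp [hg, this, (hsq t).ne']
  set H : ℝ → ℝ := fun t => ∫ y, deriv G t / (1 + y ^ 2 / 2 * deriv G t) * φ y ^ 2 with hH
  have hHm : StronglyMeasurable H := by
    have hdm : Measurable (deriv G) := measurable_deriv G
    have hφm : Measurable φ := hφ.continuous.measurable
    refine StronglyMeasurable.integral_prod_right
      (f := fun t y => deriv G t / (1 + y ^ 2 / 2 * deriv G t) * φ y ^ 2) ?_
    refine Measurable.stronglyMeasurable ?_
    simp only [Function.uncurry_def]
    fun_prop
  have hL : ∀ t, (∫ y : ℝ, (1 + y ^ 2 / 2 * deriv G t) / √(1 + G t ^ 2)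
      * (deriv (fun y' => u (y', t)) y) ^ 2)
      = g t * ∫ y, (1 + y ^ 2 / 2 * deriv G t) * (deriv φ y) ^ 2 := fun t => by
    rw [← integral_const_mul]
    refine integral_congr_ae (Filter.Eventually.of_forall fun y => ?_)
    have : deriv (fun y' => u (y', t)) y = deriv φ y * ψ t := by
      simp only [hu]
      exact deriv_mul_const (hφ.differentiable (by simp) y) _
    simp only [this, hg]
    ring
  have hR : ∀ t, (∫ y : ℝ, deriv G t / ((1 + y ^ 2 / 2 * deriv G t) * √(1 + G t ^ 2))
      * (u (y, t)) ^ 2) = g t * H t := fun t => by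
    simp only [hH]
    rw [← integral_const_mul]
    refine integral_congr_ae (Filter.Eventually.of_forall fun y => ?_)
    simp only [hu, hg, div_eq_mul_inv, mul_inv]
    ring
  have key : ∀ t, ψ t ≠ 0 → _ := fun t ht =>
    perturbed_bounds hc hφ hφs h1 h2 (hball t (hψ t ht)).2.1.le (hball t (hψ t ht)).2.2.le
  have hgz : ∀ t, ψ t = 0 → g t = 0 := fun t ht => by simp [hg, ht]
  refine ⟨u, ?_, ?_, fun x hx => ⟨trivial, (hball _ (hψt (hts hx).2)).1⟩, ?_, ?_⟩
  · exact (hφ.comp contDiff_fst).mul (ψ.contDiff.comp contDiff_snd)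
  · exact (hφs.isCompact.prod ψ.hasCompactSupport.isCompact).of_isClosed_subset
      (isClosed_tsupport _) hts
  · intro h
    have h3 : u (0, t₀) = 0 := by rw [h]; rfl
    have h4 : ψ t₀ = 1 := ψ.one_of_mem_closedBall (by simpa using ψ.rIn_pos.le)
    simp [hu, hφ0, h4] at h3
  · simp_rw [hL, hR]
    have hle1 : ∫ t in I, g t * ∫ y, (1 + y ^ 2 / 2 * deriv G t) * (deriv φ y) ^ 2
        ≤ ∫ t in I, g t * (5 / 2 * M) := by
      refine integral_mono_of_nonneg ?_ (hgi.mul_const _) (Filter.Eventually.of_forall fun t => ?_)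
      · filter_upwards [ae_restrict_mem hIo.measurableSet] with t ht
        have := hG' t ht
        exact mul_nonneg (hg0 t) (integral_nonneg fun y => by positivity)
      · by_cases ht : ψ t = 0
        · simp [hgz t ht]
        · exact mul_le_mul_of_nonneg_left (key t ht).1 (hg0 t)
    have hHi : IntegrableOn (fun t => g t * H t) I := by
      refine (hgi.mul_const (5 / 2 * c * ∫ y, φ y ^ 2)).mono'
        (hgm.mul hHm.aestronglyMeasurable) (Filter.Eventually.of_forall fun t => ?_)
      by_cases ht : ψ t = 0
      · simp [hgz t ht]
      · have h5 : 0 ≤ H t := le_trans (by positivity) (key t ht).2.1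
        rw [Real.norm_of_nonneg (mul_nonneg (hg0 t) h5)]
        exact mul_le_mul_of_nonneg_left (key t ht).2.2 (hg0 t)
    have hle2 : ∫ t in I, g t * (3 / 2 * M) ≤ ∫ t in I, g t * H t := by
      refine integral_mono (hgi.mul_const _) hHi fun t => ?_
      by_cases ht : ψ t = 0
      · simp [hgz t ht]
      · exact mul_le_mul_of_nonneg_left (key t ht).2.1 (hg0 t)
    rw [integral_mul_const] at hle1 hle2
    nlinarith [mul_pos hgpos hM]
end

section
/- In the setting of the reverse inequality lemma (δ > 0, I_δ = (−4δ,4δ), G C² on a neighborhood of the closure of I_δ with G' > 0 on I_δ, χ a cutoff with 0 ≤ χ ≤ 1, χ ≡ 1 on [−δ,δ], supp χ ⊆ [−2δ,2δ], ρ a smooth mollifier with ∫ρ = 1 and supp ρ ⊆ [−1,1], χ_k(s) = χ(s/k), ρ_k(s) = kρ(ks), G_k = G⋆ρ_k, f_k(y,t) = χ_k(y)χ(t)/√(1+(y²/2)G_k'(t)), and W(y,t) = √(1+G(t)²)·(1+(y²/2)G'(t))), the following two limits hold as k → ∞: (i) ∫∫_{ℝ×I_δ} [W/(1+G(t)²)]·(∂f_k/∂y)²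 dy dt → (√2·π/4)·∫_{−2δ}^{2δ} χ(t)²·√(G'(t)/(1+G(t)²)) dt, and (ii) 2·∫∫_{ℝ×I_δ} [G'(t)/((1+(y²/2)G'(t))·√(1+G(t)²))]·f_k² dy dt → √2·π·∫_{−2δ}^{2δ} χ(t)²·√(G'(t)/(1+G(t)²)) dt. -/
/-!
Both limits are instances of dominated convergence, once in `y` and once in `t`.

The factor `χ(t)` restricts the problem to `t ∈ [-2δ, 2δ]`. There, for `2/k ≤ δ`, the mollified
slope `G_k' = G' ⋆ ρ_k` only averages values of `G'` on `[-3δ, 3δ]` (`deriv_Gmol`), so that it lies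
in the same interval `[m, M]`, `m > 0`, as `G'` itself (`deriv_Gmol_mem`) and converges to `G'`
(`tendsto_deriv_Gmol`); pointwise convergence is enough for the argument.

With `q = 1 + (y²/2) G_k'`, one has
`(∂_y f_k)² = χ(t)² (χ'(y/k)/k - χ(y/k) (y/2) G_k' / q)² / q` (`sq_deriv_profile`).
The cut-off error `χ'(y/k)/k` lives on `|y| ≤ 2δk` and is therefore `O(1/(1 + |y|))` uniformly in `k`
(`cutoff_error`). Since `q` is comparable to `1 + y²`, both integrands are bounded by a constant
multiple of `1/(1 + y²)` (`grad_bound`), which yields convergence (`tendsto_iterated`).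
The limiting integrals in `y` reduce, via `u = √(G'/2) y`, to `∫ u²/(1+u²)² = ∫ 1/(1+u²)² = π/2`.
-/

open MeasureTheory

section Aux

open Filter Set Topology

/-! ### Explicit one-variable integrals -/

lemma one_div_sq_le (u : ℝ) : 1 / (1 + u ^ 2) ^ 2 ≤ (1 + u ^ 2)⁻¹ := by
  rw [one_div]
  apply inv_anti₀ (by positivity)
  nlinarith [sq_nonneg u, sq_nonneg (u ^ 2)]

lemma integrable_one_div_sq : Integrable (fun u : ℝ => 1 / (1 + u ^ 2) ^ 2) := by
  refine integrable_inv_one_add_sq.mono' ?_ (ae_of_all _ fun u => ?_)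
  · exact (by fun_prop : Measurable fun u : ℝ => 1 / (1 + u ^ 2) ^ 2).aestronglyMeasurable
  · rw [Real.norm_of_nonneg (by positivity)]
    exact one_div_sq_le u

lemma tendsto_div_one_add_sq {l : Filter ℝ} (hl : Tendsto (fun u : ℝ => |u|) l atTop) :
    Tendsto (fun u : ℝ => u / (1 + u ^ 2)) l (𝓝 0) := by
  refine squeeze_zero_norm' ?_ hl.inv_tendsto_atTop
  filter_upwards [hl.eventually_gt_atTop 0] with u hu
  rw [Real.norm_eq_abs, abs_div, abs_of_pos (by positivity : 0 < 1 + u ^ 2), Pi.inv_apply,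
    inv_eq_one_div, div_le_div_iff₀ (by positivity) hu]
  nlinarith [abs_mul_abs_self u]

lemma integral_one_div_sq : ∫ u : ℝ, 1 / (1 + u ^ 2) ^ 2 = Real.pi / 2 := by
  have h := integral_of_hasDerivAt_of_tendsto
    (f := fun u : ℝ => (Real.arctan u + u / (1 + u ^ 2)) / 2)
    (f' := fun u : ℝ => 1 / (1 + u ^ 2) ^ 2) (m := (-(Real.pi / 2) + 0) / 2)
    (n := (Real.pi / 2 + 0) / 2) ?_ integrable_one_div_sq ?_ ?_
  · rw [h]; ring
  · intro u
    have hq : (1 + u ^ 2) ≠ 0 := by positivity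
    have h1 : HasDerivAt (fun u : ℝ => 1 + u ^ 2) (2 * u) u := by
      simpa using (hasDerivAt_pow 2 u).const_add 1
    have h2 := ((Real.hasDerivAt_arctan u).add ((hasDerivAt_id u).div h1 hq)).div_const 2
    refine h2.congr_deriv (Eq.symm ?_)
    change 1 / (1 + u ^ 2) ^ 2
      = (1 / (1 + u ^ 2) + (1 * (1 + u ^ 2) - u * (2 * u)) / (1 + u ^ 2) ^ 2) / 2
    field_simp
    ring
  · exact ((tendsto_nhds_of_tendsto_nhdsWithin Real.tendsto_arctan_atBot).add
      (tendsto_div_one_add_sq tendsto_abs_atBot_atTop)).div_const 2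
  · exact ((tendsto_nhds_of_tendsto_nhdsWithin Real.tendsto_arctan_atTop).add
      (tendsto_div_one_add_sq tendsto_abs_atTop_atTop)).div_const 2

lemma integral_sq_div_sq : ∫ u : ℝ, u ^ 2 / (1 + u ^ 2) ^ 2 = Real.pi / 2 := by
  have h : (fun u : ℝ => u ^ 2 / (1 + u ^ 2) ^ 2)
      = fun u => (1 + u ^ 2)⁻¹ - 1 / (1 + u ^ 2) ^ 2 := by
    funext u
    have hq : (1 + u ^ 2) ≠ 0 := by positivity
    field_simp
    ring
  rw [h, integral_sub integrable_inv_one_add_sq integrable_one_div_sq, integral_one_div_sq,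
    integral_univ_inv_one_add_sq]
  ring

/-- The value of the inner integral of the first limit, via the substitution `u = √(b/2) y`. -/
lemma integral_grad {b : ℝ} (hb : 0 < b) :
    ∫ y : ℝ, (1 + y ^ 2 / 2 * b) *
      ((y / 2 * b / (1 + y ^ 2 / 2 * b)) ^ 2 / (1 + y ^ 2 / 2 * b))
      = Real.sqrt 2 * Real.pi / 4 * Real.sqrt b := by
  have hr : 0 < Real.sqrt (b / 2) := Real.sqrt_pos.2 (by positivity)
  set r := Real.sqrt (b / 2) with hrdef
  have hb2 : b = 2 * r ^ 2 := by rw [hrdef, Real.sq_sqrt (by positivity)]; ring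
  have hsb : Real.sqrt b = Real.sqrt 2 * r := by
    rw [hb2, Real.sqrt_mul (by norm_num), Real.sqrt_sq hr.le]
  have h : (fun y : ℝ => (1 + y ^ 2 / 2 * b) *
      ((y / 2 * b / (1 + y ^ 2 / 2 * b)) ^ 2 / (1 + y ^ 2 / 2 * b)))
      = fun y => r ^ 2 * ((r * y) ^ 2 / (1 + (r * y) ^ 2) ^ 2) := by
    funext y
    have : 1 + y ^ 2 / 2 * b = 1 + (r * y) ^ 2 := by rw [hb2]; ring
    rw [this]
    have hq : 1 + (r * y) ^ 2 ≠ 0 := by positivity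
    field_simp
    rw [hb2]; ring
  rw [h, integral_const_mul,
    Measure.integral_comp_mul_left (fun u : ℝ => u ^ 2 / (1 + u ^ 2) ^ 2) r, integral_sq_div_sq,
    hsb, abs_of_pos (inv_pos.2 hr), smul_eq_mul]
  have h2 : Real.sqrt 2 * Real.sqrt 2 = 2 := Real.mul_self_sqrt (by norm_num)
  field_simp
  linear_combination (-2 : ℝ) * h2

/-- The value of the inner integral of the second limit, via the substitution `u = √(b/2) y`. -/
lemma integral_zeroth {b : ℝ} (hb : 0 < b) :
    ∫ y : ℝ, b / (1 + y ^ 2 / 2 * b) * (1 / (1 + y ^ 2 / 2 * b))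
      = Real.sqrt 2 * Real.pi / 2 * Real.sqrt b := by
  have hr : 0 < Real.sqrt (b / 2) := Real.sqrt_pos.2 (by positivity)
  set r := Real.sqrt (b / 2) with hrdef
  have hb2 : b = 2 * r ^ 2 := by rw [hrdef, Real.sq_sqrt (by positivity)]; ring
  have hsb : Real.sqrt b = Real.sqrt 2 * r := by
    rw [hb2, Real.sqrt_mul (by norm_num), Real.sqrt_sq hr.le]
  have h : (fun y : ℝ => b / (1 + y ^ 2 / 2 * b) * (1 / (1 + y ^ 2 / 2 * b)))
      = fun y => b * (1 / (1 + (r * y) ^ 2) ^ 2) := by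
    funext y
    have : 1 + y ^ 2 / 2 * b = 1 + (r * y) ^ 2 := by rw [hb2]; ring
    rw [this]
    field_simp
  rw [h, integral_const_mul,
    Measure.integral_comp_mul_left (fun u : ℝ => 1 / (1 + u ^ 2) ^ 2) r, integral_one_div_sq,
    hsb, abs_of_pos (inv_pos.2 hr), smul_eq_mul]
  have h2 : Real.sqrt 2 * Real.sqrt 2 = 2 := Real.mul_self_sqrt (by norm_num)
  rw [hb2]
  field_simp
  linear_combination (-1 : ℝ) * h2

/-! ### Passing to the limit in iterated integrals -/

/-- Dominated convergence, applied twice, for iterated integrals over `I × ℝ` with the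
majorant `C / (1 + y²)`. -/
lemma tendsto_iterated {I : Set ℝ} (hI : MeasurableSet I) (hfin : volume I ≠ ⊤)
    {F : ℕ → ℝ → ℝ → ℝ} {L : ℝ → ℝ → ℝ} {C : ℝ}
    (hmeas : ∀ᶠ k in atTop, ∃ H : ℝ → ℝ → ℝ, Measurable (Function.uncurry H) ∧
      ∀ t ∈ I, ∀ y, F k t y = H t y)
    (hbd : ∀ᶠ k in atTop, ∀ t ∈ I, ∀ y, |F k t y| ≤ C * (1 + y ^ 2)⁻¹)
    (hlim : ∀ t ∈ I, ∀ y, Tendsto (fun k => F k t y) atTop (𝓝 (L t y))) :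
    Tendsto (fun k => ∫ t in I, ∫ y, F k t y) atTop (𝓝 (∫ t in I, ∫ y, L t y)) := by
  have hint : Integrable (fun y : ℝ => C * (1 + y ^ 2)⁻¹) :=
    integrable_inv_one_add_sq.const_mul C
  refine tendsto_integral_filter_of_dominated_convergence
    (fun _ => ∫ y : ℝ, C * (1 + y ^ 2)⁻¹) ?_ ?_ ?_ ?_
  · filter_upwards [hmeas] with k ⟨H, hH, hFH⟩
    refine (hH.stronglyMeasurable.integral_prod_right (ν := volume)).aestronglyMeasurable.congr ?_
    filter_upwards [ae_restrict_mem hI] with t ht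
    exact integral_congr_ae (ae_of_all _ fun y => (hFH t ht y).symm)
  · filter_upwards [hbd] with k hk
    filter_upwards [ae_restrict_mem hI] with t ht
    exact norm_integral_le_of_norm_le hint (ae_of_all _ fun y => hk t ht y)
  · exact integrableOn_const hfin
  · filter_upwards [ae_restrict_mem hI] with t ht
    refine tendsto_integral_filter_of_dominated_convergence (fun y => C * (1 + y ^ 2)⁻¹)
      ?_ ?_ hint (ae_of_all _ (hlim t ht))
    · filter_upwards [hmeas] with k ⟨H, hH, hFH⟩
      have : F k t = H t := funext (hFH t ht)
      rw [this]
      exact (hH.comp measurable_prodMk_left).aestronglyMeasurable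
    · filter_upwards [hbd] with k hk
      exact ae_of_all _ fun y => hk t ht y

/-! ### The mollified slope -/

lemma Gmol_eq {G ρ : ℝ → ℝ} (hρsupp : Function.support ρ ⊆ Icc (-1) 1) {k : ℕ} (hk : 0 < k)
    (t : ℝ) : Gmol G ρ k t = ∫ u in Icc (-1 : ℝ) 1, ρ u * G (t - u / k) := by
  have hk' : (0 : ℝ) < k := by exact_mod_cast hk
  rw [setIntegral_eq_integral_of_forall_compl_eq_zero]
  · have h := Measure.integral_comp_mul_left (fun u : ℝ => (k : ℝ) * (ρ u * G (t - u / k))) k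
    rw [integral_const_mul (k : ℝ) (fun u : ℝ => ρ u * G (t - u / k)),
      abs_of_pos (inv_pos.2 hk'), smul_eq_mul, inv_mul_cancel_left₀ hk'.ne'] at h
    rw [← h, Gmol]
    congr 1
    funext s
    rw [mul_div_cancel_left₀ _ hk'.ne']
    ring
  · intro u hu
    have : ρ u = 0 := by
      by_contra h0
      exact hu (hρsupp h0)
    rw [this, zero_mul]

lemma sub_div_mem {δ : ℝ} {k : ℕ} (hδ : 0 < δ) (hk : 2 / δ ≤ k) {t x u : ℝ}
    (ht : t ∈ Icc (-(2 * δ)) (2 * δ)) (hx : x ∈ Metric.ball t (δ / 2))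
    (hu : u ∈ Icc (-1 : ℝ) 1) : x - u / k ∈ Icc (-(3 * δ)) (3 * δ) := by
  have hk0 : (0 : ℝ) < k := lt_of_lt_of_le (by positivity) hk
  have h2 : 2 ≤ k * δ := by rwa [div_le_iff₀ hδ] at hk
  have h3 : |u / k| ≤ δ / 2 := by
    rw [abs_div, abs_of_pos hk0, div_le_iff₀ hk0]
    have := abs_le.2 hu
    linarith
  rw [Metric.mem_ball, Real.dist_eq, abs_lt] at hx
  rw [abs_le] at h3
  constructor <;> linarith [ht.1, ht.2, h3.1, h3.2, hx.1, hx.2]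

section Mollify

variable {δ : ℝ} {G g ρ : ℝ → ℝ}

lemma continuousOn_kernel (hρ : Continuous ρ) {h : ℝ → ℝ} (hh : ContinuousOn h (Icc (-(3 * δ)) (3 * δ)))
    {k : ℕ} {x : ℝ} (hx : ∀ u ∈ Icc (-1 : ℝ) 1, x - u / k ∈ Icc (-(3 * δ)) (3 * δ)) :
    ContinuousOn (fun u => ρ u * h (x - u / k)) (Icc (-1 : ℝ) 1) :=
  hρ.continuousOn.mul (hh.comp (by fun_prop) hx)

/-- The derivative of `G ⋆ ρ_k` is `G' ⋆ ρ_k` at points of `[-2δ, 2δ]`, as soon as `2/k ≤ δ`;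
only the values of `G` on `[-3δ, 3δ]` enter. -/
lemma deriv_Gmol (hδ : 0 < δ) (hρ : Continuous ρ) (hρsupp : Function.support ρ ⊆ Icc (-1) 1)
    (hd : ∀ t ∈ Icc (-(3 * δ)) (3 * δ), HasDerivAt G (g t) t)
    (hc : ContinuousOn g (Icc (-(3 * δ)) (3 * δ)))
    {k : ℕ} (hk : 2 / δ ≤ k) {t : ℝ} (ht : t ∈ Icc (-(2 * δ)) (2 * δ)) :
    deriv (Gmol G ρ k) t = ∫ u in Icc (-1 : ℝ) 1, ρ u * g (t - u / k) := by
  have hk0 : (0 : ℝ) < k := lt_of_lt_of_le (by positivity) hk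
  have hk0' : 0 < k := by exact_mod_cast hk0
  have hG : ContinuousOn G (Icc (-(3 * δ)) (3 * δ)) :=
    fun s hs => (hd s hs).continuousAt.continuousWithinAt
  obtain ⟨M, hM⟩ := isCompact_Icc.exists_bound_of_continuousOn hc
  have hball : Metric.ball t (δ / 2) ∈ 𝓝 t := Metric.ball_mem_nhds t (by positivity)
  have htb : t ∈ Metric.ball t (δ / 2) := Metric.mem_ball_self (by positivity)
  have key := hasDerivAt_integral_of_dominated_loc_of_deriv_le
    (μ := volume.restrict (Icc (-1 : ℝ) 1)) (x₀ := t) (s := Metric.ball t (δ / 2))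
    (F := fun x u => ρ u * G (x - u / k)) (F' := fun x u => ρ u * g (x - u / k))
    (bound := fun u => ‖ρ u‖ * M) hball ?_ ?_ ?_ ?_ ?_ ?_
  · have : Gmol G ρ k = fun x => ∫ u in Icc (-1 : ℝ) 1, ρ u * G (x - u / k) :=
      funext (Gmol_eq hρsupp hk0')
    rw [this]
    exact key.2.deriv
  · filter_upwards [hball] with x hx
    exact (continuousOn_kernel hρ hG fun u hu => sub_div_mem hδ hk ht hx hu).aestronglyMeasurable
      measurableSet_Icc
  · exact (continuousOn_kernel hρ hG fun u hu => sub_div_mem hδ hk ht htb hu).integrableOn_compact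
      isCompact_Icc
  · exact (continuousOn_kernel hρ hc fun u hu => sub_div_mem hδ hk ht htb hu).aestronglyMeasurable
      measurableSet_Icc
  · filter_upwards [ae_restrict_mem measurableSet_Icc] with u hu x hx
    rw [norm_mul]
    exact mul_le_mul_of_nonneg_left (hM _ (sub_div_mem hδ hk ht hx hu)) (norm_nonneg _)
  · exact (hρ.norm.mul continuous_const).continuousOn.integrableOn_compact isCompact_Icc
  · filter_upwards [ae_restrict_mem measurableSet_Icc] with u hu x hx
    exact ((hd _ (sub_div_mem hδ hk ht hx hu)).comp_sub_const x (u / k)).const_mul (ρ u)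

lemma integral_rho (hρsupp : Function.support ρ ⊆ Icc (-1) 1) (hρint : ∫ s : ℝ, ρ s = 1) :
    ∫ u in Icc (-1 : ℝ) 1, ρ u = 1 := by
  rw [setIntegral_eq_integral_of_forall_compl_eq_zero, hρint]
  intro u hu
  by_contra h0
  exact hu (hρsupp h0)

/-- The mollified slope obeys the same two-sided bounds as the slope, being an average of it. -/
lemma deriv_Gmol_mem (hδ : 0 < δ) (hρ : Continuous ρ)
    (hρsupp : Function.support ρ ⊆ Icc (-1) 1) (hρ0 : ∀ s, 0 ≤ ρ s)
    (hρint : ∫ s : ℝ, ρ s = 1)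
    (hd : ∀ t ∈ Icc (-(3 * δ)) (3 * δ), HasDerivAt G (g t) t)
    (hc : ContinuousOn g (Icc (-(3 * δ)) (3 * δ))) {m M : ℝ}
    (hm : ∀ t ∈ Icc (-(3 * δ)) (3 * δ), g t ∈ Icc m M)
    {k : ℕ} (hk : 2 / δ ≤ k) {t : ℝ} (ht : t ∈ Icc (-(2 * δ)) (2 * δ)) :
    deriv (Gmol G ρ k) t ∈ Icc m M := by
  rw [deriv_Gmol hδ hρ hρsupp hd hc hk ht]
  have htb : t ∈ Metric.ball t (δ / 2) := Metric.mem_ball_self (by positivity)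
  have hmem := fun u hu => sub_div_mem hδ hk ht htb (u := u) hu
  have hi : IntegrableOn (fun u => ρ u * g (t - u / k)) (Icc (-1 : ℝ) 1) :=
    (continuousOn_kernel hρ hc hmem).integrableOn_compact isCompact_Icc
  have hc' : ∀ c : ℝ, IntegrableOn (fun u => ρ u * c) (Icc (-1 : ℝ) 1) := fun c =>
    (hρ.mul continuous_const).continuousOn.integrableOn_compact isCompact_Icc
  have hv : ∀ c : ℝ, ∫ u in Icc (-1 : ℝ) 1, ρ u * c = c := fun c => by
    rw [integral_mul_const, integral_rho hρsupp hρint, one_mul]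
  constructor
  · rw [← hv m]
    exact setIntegral_mono_on (hc' m) hi measurableSet_Icc fun u hu =>
      mul_le_mul_of_nonneg_left (hm _ (hmem u hu)).1 (hρ0 u)
  · conv_rhs => rw [← hv M]
    exact setIntegral_mono_on hi (hc' M) measurableSet_Icc fun u hu =>
      mul_le_mul_of_nonneg_left (hm _ (hmem u hu)).2 (hρ0 u)

lemma tendsto_deriv_Gmol (hδ : 0 < δ) (hρ : Continuous ρ)
    (hρsupp : Function.support ρ ⊆ Icc (-1) 1) (hρint : ∫ s : ℝ, ρ s = 1)
    (hd : ∀ t ∈ Icc (-(3 * δ)) (3 * δ), HasDerivAt G (g t) t)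
    (hc : ContinuousOn g (Icc (-(3 * δ)) (3 * δ)))
    {t : ℝ} (ht : t ∈ Icc (-(2 * δ)) (2 * δ)) :
    Tendsto (fun k : ℕ => deriv (Gmol G ρ k) t) atTop (𝓝 (g t)) := by
  have hev : ∀ᶠ k : ℕ in atTop, 2 / δ ≤ k :=
    tendsto_natCast_atTop_atTop.eventually_ge_atTop (2 / δ)
  have htb : t ∈ Metric.ball t (δ / 2) := Metric.mem_ball_self (by positivity)
  obtain ⟨M, hM⟩ := isCompact_Icc.exists_bound_of_continuousOn hc
  have hgt : ∫ u in Icc (-1 : ℝ) 1, ρ u * g t = g t := by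
    rw [integral_mul_const, integral_rho hρsupp hρint, one_mul]
  have key : Tendsto (fun k : ℕ => ∫ u in Icc (-1 : ℝ) 1, ρ u * g (t - u / k)) atTop
      (𝓝 (∫ u in Icc (-1 : ℝ) 1, ρ u * g t)) := by
    refine tendsto_integral_filter_of_dominated_convergence (fun u => ‖ρ u‖ * M) ?_ ?_ ?_ ?_
    · filter_upwards [hev] with k hk
      exact (continuousOn_kernel hρ hc fun u hu => sub_div_mem hδ hk ht htb hu).aestronglyMeasurable
        measurableSet_Icc
    · filter_upwards [hev] with k hk
      filter_upwards [ae_restrict_mem measurableSet_Icc] with u hu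
      rw [norm_mul]
      exact mul_le_mul_of_nonneg_left (hM _ (sub_div_mem hδ hk ht htb hu)) (norm_nonneg _)
    · exact (hρ.norm.mul continuous_const).continuousOn.integrableOn_compact isCompact_Icc
    · refine ae_of_all _ fun u => Tendsto.const_mul _ ?_
      have hca : ContinuousAt g t := hc.continuousAt
        (Icc_mem_nhds (by linarith [ht.1]) (by linarith [ht.2]))
      have h1 : Tendsto (fun k : ℕ => t - u / (k : ℝ)) atTop (𝓝 t) := by
        simpa using (tendsto_const_div_atTop_nhds_zero_nat u).const_sub t
      exact hca.tendsto.comp h1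
  rw [hgt] at key
  refine key.congr' ?_
  filter_upwards [hev] with k hk
  exact (deriv_Gmol hδ hρ hρsupp hd hc hk ht).symm

end Mollify

/-! ### Pointwise formulas and bounds for the profile -/

lemma q_pos {a : ℝ} (ha : 0 ≤ a) (y : ℝ) : 0 < 1 + y ^ 2 / 2 * a := by positivity

lemma q_lower {m a : ℝ} (hma : m ≤ a) (y : ℝ) :
    min 1 (m / 2) * (1 + y ^ 2) ≤ 1 + y ^ 2 / 2 * a := by
  have h1 : min 1 (m / 2) ≤ 1 := min_le_left _ _
  have h2 : min 1 (m / 2) ≤ a / 2 := (min_le_right _ _).trans (by linarith)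
  nlinarith [sq_nonneg y]

/-- The squared `y`-derivative of the profile; squaring clears the outer square root, leaving a
rational expression in `q = 1 + (y²/2)a`. -/
lemma sq_deriv_profile {χ : ℝ → ℝ} (hχ : Differentiable ℝ χ) (κ c : ℝ) {a : ℝ} (ha : 0 ≤ a)
    (y : ℝ) :
    (deriv (fun y' => χ (y' / κ) * c / Real.sqrt (1 + y' ^ 2 / 2 * a)) y) ^ 2
      = c ^ 2 * ((deriv χ (y / κ) / κ - χ (y / κ) * (y / 2 * a / (1 + y ^ 2 / 2 * a))) ^ 2
          / (1 + y ^ 2 / 2 * a)) := by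
  have hq : 0 < 1 + y ^ 2 / 2 * a := q_pos ha y
  have h1 : HasDerivAt (fun y' => χ (y' / κ)) (deriv χ (y / κ) * (1 / κ)) y :=
    (hχ (y / κ)).hasDerivAt.comp y ((hasDerivAt_id y).div_const κ)
  have h2 : HasDerivAt (fun y' : ℝ => 1 + y' ^ 2 / 2 * a) (y * a) y := by
    have := (((hasDerivAt_pow 2 y).div_const 2).mul_const a).const_add 1
    refine this.congr_deriv ?_
    norm_num
  have hs : 0 < Real.sqrt (1 + y ^ 2 / 2 * a) := Real.sqrt_pos.2 hq
  have h3 := (h1.mul_const c).div (h2.sqrt hq.ne') hs.ne'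
  have h4 := h3.deriv
  change deriv (fun y' => χ (y' / κ) * c / Real.sqrt (1 + y' ^ 2 / 2 * a)) y = _ at h4
  rw [h4]
  have hsq : 1 + y ^ 2 / 2 * a = Real.sqrt (1 + y ^ 2 / 2 * a) ^ 2 := (Real.sq_sqrt hq.le).symm
  generalize Real.sqrt (1 + y ^ 2 / 2 * a) = S at *
  rw [hsq, div_pow, div_eq_mul_one_div (deriv χ (y / κ)) κ]
  field_simp

/-- The majorant for the first limit: `(∂_y f_k)²` decays like `(1 + y²)⁻²`, where the cut-off
error `e` is only known to be `O((1 + y²)^(-1/2))`. -/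
lemma grad_bound {m M a b e x y B : ℝ} (hm : 0 < m) (hma : m ≤ a) (haM : a ≤ M) (hbM : b ≤ M)
    (hx0 : 0 ≤ x) (hx1 : x ≤ 1) (he : e ^ 2 * (1 + y ^ 2) ≤ B) :
    (1 + y ^ 2 / 2 * b) * ((e - x * (y / 2 * a / (1 + y ^ 2 / 2 * a))) ^ 2
        / (1 + y ^ 2 / 2 * a))
      ≤ ((1 + M) * (2 * B / min 1 (m / 2) + M / min 1 (m / 2) ^ 2)) * (1 + y ^ 2)⁻¹ := by
  have hc : 0 < min 1 (m / 2) := lt_min one_pos (by positivity)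
  have hqc := q_lower hma y
  have ha : 0 < a := hm.trans_le hma
  have hq : 0 < 1 + y ^ 2 / 2 * a := q_pos ha.le y
  set c := min 1 (m / 2)
  set p := 1 + y ^ 2 with hp
  have hp0 : 0 < p := by positivity
  set q := 1 + y ^ 2 / 2 * a with hqdef
  have hM : 0 < M := by linarith
  have hz : (x * (y / 2 * a / q)) ^ 2 ≤ M / 2 / q := by
    have h1 : (x * (y / 2 * a / q)) ^ 2 = x ^ 2 * ((y / 2 * a) ^ 2 / q ^ 2) := by ring
    rw [h1]
    have h2 : x ^ 2 ≤ 1 := by nlinarith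
    have h3 : (y / 2 * a) ^ 2 ≤ M / 2 * q := by
      have : (y / 2 * a) ^ 2 = a / 2 * (q - 1) := by rw [hqdef]; ring
      rw [this]
      have h1q : 1 ≤ q := by rw [hqdef]; linarith [show 0 ≤ y ^ 2 / 2 * a by positivity]
      nlinarith
    calc x ^ 2 * ((y / 2 * a) ^ 2 / q ^ 2) ≤ 1 * ((M / 2 * q) / q ^ 2) := by gcongr
      _ = M / 2 / q := by field_simp
  have hB : e ^ 2 ≤ B / p := by rwa [le_div_iff₀ hp0]
  have hB0 : 0 ≤ B := le_trans (by positivity) he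
  have h1 : (e - x * (y / 2 * a / q)) ^ 2 ≤ 2 * (B / p) + M / q := by
    have : M / q = 2 * (M / 2 / q) := by ring
    rw [this]
    nlinarith [sq_nonneg (e + x * (y / 2 * a / q))]
  have hcp : 0 < c * p := by positivity
  calc (1 + y ^ 2 / 2 * b) * ((e - x * (y / 2 * a / q)) ^ 2 / q)
      ≤ ((1 + M) * p) * ((2 * (B / p) + M / (c * p)) / (c * p)) := by
        have h5 : 1 + y ^ 2 / 2 * b ≤ (1 + M) * p := by rw [hp]; nlinarith [sq_nonneg y]
        have h6 : (e - x * (y / 2 * a / q)) ^ 2 ≤ 2 * (B / p) + M / (c * p) :=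
          h1.trans (by gcongr)
        gcongr
    _ = _ := by field_simp

lemma sqrt_quot (b G : ℝ) :
    Real.sqrt (1 + G ^ 2) / (1 + G ^ 2) * Real.sqrt b = Real.sqrt (b / (1 + G ^ 2)) := by
  have h : 0 < 1 + G ^ 2 := by positivity
  rw [Real.sqrt_div' _ h.le, Real.sqrt_div_self]
  ring

lemma weight_mem (G : ℝ) : Real.sqrt (1 + G ^ 2) / (1 + G ^ 2) ∈ Icc (0 : ℝ) 1 := by
  refine ⟨by positivity, ?_⟩
  rw [Real.sqrt_div_self]
  exact inv_le_one_of_one_le₀ (Real.one_le_sqrt.2 (by nlinarith [sq_nonneg G]))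

/-- The error `χ'(y/k)/k` lives on `|y| ≤ 2δk`, so it is `O(1/(1 + |y|))` uniformly in `k`. -/
lemma cutoff_error {δ : ℝ} {χ : ℝ → ℝ}
    (hχsupp : Function.support χ ⊆ Icc (-(2 * δ)) (2 * δ)) {B : ℝ}
    (hB : ∀ s, ‖deriv χ s‖ ≤ B) {k : ℝ} (hk : 1 ≤ k) (y : ℝ) :
    (deriv χ (y / k) / k) ^ 2 * (1 + y ^ 2) ≤ B ^ 2 * (1 + 4 * δ ^ 2) := by
  have hk0 : 0 < k := by linarith
  by_cases h0 : deriv χ (y / k) = 0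
  · rw [h0]
    simp only [zero_div, ne_eq, OfNat.ofNat_ne_zero, not_false_eq_true, zero_pow, zero_mul]
    positivity
  · have hmem : y / k ∈ Icc (-(2 * δ)) (2 * δ) :=
      closure_minimal hχsupp isClosed_Icc (support_deriv_subset h0)
    have h1 : (y / k) ^ 2 ≤ 4 * δ ^ 2 := by nlinarith [hmem.1, hmem.2]
    have h2 : deriv χ (y / k) ^ 2 ≤ B ^ 2 := by
      rw [← sq_abs, ← Real.norm_eq_abs]
      exact pow_le_pow_left₀ (norm_nonneg _) (hB _) 2
    have h3 : 1 / k ^ 2 ≤ 1 := by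
      rw [div_le_one (by positivity)]
      nlinarith
    have h4 : (deriv χ (y / k) / k) ^ 2 * (1 + y ^ 2)
        = deriv χ (y / k) ^ 2 * (1 / k ^ 2 + (y / k) ^ 2) := by
      field_simp
    rw [h4]
    gcongr

lemma tendsto_cutoff {δ : ℝ} (hδ : 0 < δ) {χ : ℝ → ℝ} (hχeq : ∀ s ∈ Icc (-δ) δ, χ s = 1)
    (y : ℝ) : Tendsto (fun k : ℕ => χ (y / k)) atTop (𝓝 1) := by
  have h := tendsto_const_div_atTop_nhds_zero_nat y
  refine tendsto_const_nhds.congr' ?_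
  filter_upwards [h (Icc_mem_nhds (neg_lt_zero.2 hδ) hδ)] with k hk
  exact (hχeq _ hk).symm

lemma tendsto_cutoff_error {χ : ℝ → ℝ} {B : ℝ} (hB : ∀ s, ‖deriv χ s‖ ≤ B) (y : ℝ) :
    Tendsto (fun k : ℕ => deriv χ (y / k) / k) atTop (𝓝 0) := by
  refine squeeze_zero_norm (fun k => ?_) (tendsto_const_div_atTop_nhds_zero_nat B)
  rw [norm_div, RCLike.norm_natCast]
  exact div_le_div_of_nonneg_right (hB _) (Nat.cast_nonneg k)

lemma setIntegral_to_interval {δ : ℝ} (hδ : 0 < δ) {χ : ℝ → ℝ}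
    (hχsupp : Function.support χ ⊆ Icc (-(2 * δ)) (2 * δ)) {c : ℝ} {A R : ℝ → ℝ}
    (h : ∀ t ∈ Ioo (-(4 * δ)) (4 * δ), A t = c * (χ t ^ 2 * R t)) :
    ∫ t in Ioo (-(4 * δ)) (4 * δ), A t = c * ∫ t in (-(2 * δ))..(2 * δ), χ t ^ 2 * R t := by
  rw [setIntegral_congr_fun measurableSet_Ioo h, integral_const_mul,
    intervalIntegral.integral_of_le (by linarith), ← integral_Icc_eq_integral_Ioc]
  congr 1
  refine setIntegral_eq_of_subset_of_forall_sdiff_eq_zero measurableSet_Ioo ?_ ?_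
  · intro t ht
    exact ⟨by linarith [ht.1], by linarith [ht.2]⟩
  · intro t ht
    have : χ t = 0 := by
      by_contra h0
      exact ht.2 (hχsupp h0)
    rw [this]; ring

end Aux

/-- with `W(y,t) = √(1+G(t)²)·(1+(y²/2)G'(t))`, as `k → ∞`:
(i) `∫∫_{ℝ×I_δ} [W/(1+G²)]·(∂f_k/∂y)² → (√2·π/4)·∫_{−2δ}^{2δ} χ²·√(G'/(1+G²))`, and
(ii) `2∫∫_{ℝ×I_δ} [G'/((1+(y²/2)G')√(1+G²))]·f_k² → √2·π·∫_{−2δ}^{2δ} χ²·√(G'/(1+G²))`. -/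
theorem stmt10 (δ : ℝ) (hδ : 0 < δ) (G χ ρ : ℝ → ℝ)
    (U : Set ℝ) (hU : IsOpen U) (hUc : U.OrdConnected)
    (hUI : Set.Icc (-(4 * δ)) (4 * δ) ⊆ U)
    (hG : ContDiffOn ℝ 2 G U)
    (hG' : ∀ t ∈ Set.Ioo (-(4 * δ)) (4 * δ), 0 < deriv G t)
    (hχs : ContDiff ℝ (⊤ : ℕ∞) χ) (hχc : HasCompactSupport χ)
    (hχ0 : ∀ s, 0 ≤ χ s) (hχ1 : ∀ s, χ s ≤ 1)
    (hχeq : ∀ s ∈ Set.Icc (-δ) δ, χ s = 1)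
    (hχsupp : Function.support χ ⊆ Set.Icc (-(2 * δ)) (2 * δ))
    (hρs : ContDiff ℝ (⊤ : ℕ∞) ρ) (hρc : HasCompactSupport ρ)
    (hρ0 : ∀ s, 0 ≤ ρ s) (hρsupp : Function.support ρ ⊆ Set.Icc (-1) 1)
    (hρint : ∫ s : ℝ, ρ s = 1) :
    Filter.Tendsto (fun k : ℕ =>
        ∫ t in Set.Ioo (-(4 * δ)) (4 * δ), ∫ y : ℝ,
          (Real.sqrt (1 + G t ^ 2) * (1 + y ^ 2 / 2 * deriv G t)) / (1 + G t ^ 2)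
            * (deriv (fun y' => fk G χ ρ k y' t) y) ^ 2)
      Filter.atTop
      (nhds ((Real.sqrt 2 * Real.pi / 4)
        * ∫ t in (-(2 * δ))..(2 * δ), χ t ^ 2 * Real.sqrt (deriv G t / (1 + G t ^ 2)))) ∧
    Filter.Tendsto (fun k : ℕ =>
        2 * ∫ t in Set.Ioo (-(4 * δ)) (4 * δ), ∫ y : ℝ,
          deriv G t / ((1 + y ^ 2 / 2 * deriv G t) * Real.sqrt (1 + G t ^ 2))
            * (fk G χ ρ k y t) ^ 2)
      Filter.atTop
      (nhds (Real.sqrt 2 * Real.pi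
        * ∫ t in (-(2 * δ))..(2 * δ), χ t ^ 2 * Real.sqrt (deriv G t / (1 + G t ^ 2)))) := by
  classical
  set g := deriv G with hg
  set I := Set.Ioo (-(4 * δ)) (4 * δ) with hI
  have hJI : Set.Icc (-(3 * δ)) (3 * δ) ⊆ I := fun t ht =>
    ⟨by linarith [ht.1], by linarith [ht.2]⟩
  have hIU : I ⊆ U := Set.Ioo_subset_Icc_self.trans hUI
  have hJ : Set.Icc (-(2 * δ)) (2 * δ) ⊆ Set.Icc (-(3 * δ)) (3 * δ) := fun t ht =>
    ⟨by linarith [ht.1], by linarith [ht.2]⟩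
  have hd : ∀ t ∈ Set.Icc (-(3 * δ)) (3 * δ), HasDerivAt G (g t) t := fun t ht =>
    ((hG.differentiableOn (by norm_num)).differentiableAt
      (hU.mem_nhds (hIU (hJI ht)))).hasDerivAt
  have hc : ContinuousOn g (Set.Icc (-(3 * δ)) (3 * δ)) :=
    (hG.continuousOn_deriv_of_isOpen hU (by norm_num)).mono (hJI.trans hIU)
  obtain ⟨m, M, hm, hmM⟩ : ∃ m M : ℝ, 0 < m ∧
      ∀ t ∈ Set.Icc (-(3 * δ)) (3 * δ), g t ∈ Set.Icc m M := by
    have hne : (Set.Icc (-(3 * δ)) (3 * δ)).Nonempty := Set.nonempty_Icc.2 (by linarith)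
    obtain ⟨t₁, ht₁, h₁⟩ := isCompact_Icc.exists_isMinOn hne hc
    obtain ⟨t₂, ht₂, h₂⟩ := isCompact_Icc.exists_isMaxOn hne hc
    exact ⟨g t₁, g t₂, hG' _ (hJI ht₁), fun t ht => ⟨h₁ ht, h₂ ht⟩⟩
  have hM : 0 < M := by
    have h0 := hmM 0 ⟨by linarith, by linarith⟩
    linarith [h0.1, h0.2]
  obtain ⟨B, hB⟩ := (hχs.continuous_deriv (by simp)).bounded_above_of_compact_support hχc.deriv
  have hχd : Differentiable ℝ χ := hχs.differentiable (by simp)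
  -- The factor `χ(t)` confines everything to `[-2δ, 2δ]`, where the slopes lie in `[m, M]`.
  have hχ_out : ∀ t, t ∉ Set.Icc (-(2 * δ)) (2 * δ) → χ t = 0 := fun t ht => by
    by_contra h0
    exact ht (hχsupp h0)
  have hev : ∀ᶠ k : ℕ in Filter.atTop, 2 / δ ≤ k ∧ (1 : ℝ) ≤ k :=
    (tendsto_natCast_atTop_atTop.eventually_ge_atTop (2 / δ)).and
      (tendsto_natCast_atTop_atTop.eventually_ge_atTop 1)
  have hmem : ∀ k : ℕ, 2 / δ ≤ k → ∀ t ∈ Set.Icc (-(2 * δ)) (2 * δ),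
      deriv (Gmol G ρ k) t ∈ Set.Icc m M := fun k hk t ht =>
    deriv_Gmol_mem hδ hρs.continuous hρsupp hρ0 hρint hd hc hmM hk ht
  have hlim : ∀ t ∈ Set.Icc (-(2 * δ)) (2 * δ),
      Filter.Tendsto (fun k : ℕ => deriv (Gmol G ρ k) t) Filter.atTop (nhds (g t)) :=
    fun t ht => tendsto_deriv_Gmol hδ hρs.continuous hρsupp hρint hd hc ht
  -- `G` is arbitrary outside `U`; on `I` it agrees with a globally measurable function.
  obtain ⟨G₁, hG₁m, hG₁⟩ : ∃ G₁ : ℝ → ℝ, Measurable G₁ ∧ ∀ t ∈ I, G t = G₁ t := by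
    refine ⟨I.piecewise G 0, (hG.continuousOn.mono hIU).measurable_piecewise
      continuousOn_const measurableSet_Ioo, fun t ht => ?_⟩
    rw [Set.piecewise_eq_of_mem _ _ _ ht]
  have hgm : Measurable g := measurable_deriv G
  have ham : ∀ k, Measurable (deriv (Gmol G ρ k)) := fun k => measurable_deriv _
  have hχm : Measurable χ := hχs.continuous.measurable
  have hχ'm : Measurable (deriv χ) := measurable_deriv _
  have hfin : volume I ≠ ⊤ := by rw [hI]; exact measure_Ioo_lt_top.ne
  set c := min 1 (m / 2) with hcdef
  have hc0 : 0 < c := lt_min one_pos (by positivity)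
  have hχsq : ∀ t, χ t ^ 2 ∈ Set.Icc (0 : ℝ) 1 := fun t =>
    ⟨sq_nonneg _, pow_le_one₀ (hχ0 t) (hχ1 t)⟩
  constructor
  · have hform : ∀ᶠ k : ℕ in Filter.atTop, ∀ t y : ℝ,
        (Real.sqrt (1 + G t ^ 2) * (1 + y ^ 2 / 2 * g t)) / (1 + G t ^ 2)
            * (deriv (fun y' => fk G χ ρ k y' t) y) ^ 2
          = χ t ^ 2 * (Real.sqrt (1 + G t ^ 2) / (1 + G t ^ 2)) *
            ((1 + y ^ 2 / 2 * g t) * ((deriv χ (y / k) / k - χ (y / k) *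
              (y / 2 * deriv (Gmol G ρ k) t / (1 + y ^ 2 / 2 * deriv (Gmol G ρ k) t))) ^ 2
                / (1 + y ^ 2 / 2 * deriv (Gmol G ρ k) t))) := by
      filter_upwards [hev] with k hk t y
      by_cases ht : t ∈ Set.Icc (-(2 * δ)) (2 * δ)
      · simp only [fk]
        rw [sq_deriv_profile hχd k (χ t) (hm.le.trans (hmem k hk.1 t ht).1) y]
        ring
      · simp [fk, hχ_out t ht]
    rw [← setIntegral_to_interval hδ hχsupp
      (A := fun t => ∫ y : ℝ, χ t ^ 2 * (Real.sqrt (1 + G t ^ 2) / (1 + G t ^ 2)) *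
        ((1 + y ^ 2 / 2 * g t) *
          ((y / 2 * g t / (1 + y ^ 2 / 2 * g t)) ^ 2 / (1 + y ^ 2 / 2 * g t))))]
    · refine tendsto_iterated measurableSet_Ioo hfin
        (C := (1 + M) * (2 * (B ^ 2 * (1 + 4 * δ ^ 2)) / c + M / c ^ 2)) ?_ ?_ ?_
      · filter_upwards [hform] with k hk
        refine ⟨fun t y => χ t ^ 2 * (Real.sqrt (1 + G₁ t ^ 2) / (1 + G₁ t ^ 2)) *
            ((1 + y ^ 2 / 2 * g t) * ((deriv χ (y / k) / k - χ (y / k) *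
              (y / 2 * deriv (Gmol G ρ k) t / (1 + y ^ 2 / 2 * deriv (Gmol G ρ k) t))) ^ 2
                / (1 + y ^ 2 / 2 * deriv (Gmol G ρ k) t))), ?_, fun t ht y => ?_⟩
        · have := ham k
          simp only [Function.uncurry_def]
          fun_prop
        · rw [hk, hG₁ t ht]
      · filter_upwards [hform, hev] with k hk hkev t _ y
        rw [hk]
        by_cases ht : t ∈ Set.Icc (-(2 * δ)) (2 * δ)
        · have ha := hmem k hkev.1 t ht
          have hb := hmM t (hJ ht)
          have hb0 : 0 ≤ g t := hm.le.trans hb.1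
          have ha0 : 0 ≤ deriv (Gmol G ρ k) t := hm.le.trans ha.1
          have hw := weight_mem (G t)
          have hq1 := q_pos hb0 y
          have hq2 := q_pos ha0 y
          have hbound := grad_bound hm ha.1 ha.2 hb.2 (hχ0 (y / k)) (hχ1 (y / k))
            (cutoff_error hχsupp hB hkev.2 y)
          rw [abs_of_nonneg (mul_nonneg (mul_nonneg (hχsq t).1 hw.1) (by positivity))]
          exact (mul_le_of_le_one_left (by positivity)
            (mul_le_one₀ (hχsq t).2 hw.1 hw.2)).trans hbound
        · rw [hχ_out t ht]
          simp only [ne_eq, OfNat.ofNat_ne_zero, not_false_eq_true, zero_pow, zero_mul, abs_zero]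
          positivity
      · intro t _ y
        refine Filter.Tendsto.congr'
          (hform.mono fun k hk => (hk t y).symm) ?_
        by_cases ht : t ∈ Set.Icc (-(2 * δ)) (2 * δ)
        · have hq := q_pos (hm.le.trans (hmM t (hJ ht)).1) y
          have hqa := ((hlim t ht).const_mul (y ^ 2 / 2)).const_add 1
          have hza := ((hlim t ht).const_mul (y / 2)).div hqa hq.ne'
          have hall := (((tendsto_cutoff_error hB y).sub
            ((tendsto_cutoff hδ hχeq y).mul hza)).pow 2).div hqa hq.ne'
          have h2 := (hall.const_mul (1 + y ^ 2 / 2 * g t)).const_mul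
            (χ t ^ 2 * (Real.sqrt (1 + G t ^ 2) / (1 + G t ^ 2)))
          simp only [zero_sub, one_mul, neg_sq] at h2
          exact h2
        · rw [hχ_out t ht]
          simp
    · intro t ht
      rw [integral_const_mul, integral_grad (hG' t ht), ← sqrt_quot]
      ring
  · have hform : ∀ᶠ k : ℕ in Filter.atTop, ∀ t y : ℝ,
        g t / ((1 + y ^ 2 / 2 * g t) * Real.sqrt (1 + G t ^ 2)) * (fk G χ ρ k y t) ^ 2
          = χ t ^ 2 * (Real.sqrt (1 + G t ^ 2) / (1 + G t ^ 2)) *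
            (g t / (1 + y ^ 2 / 2 * g t) * (χ (y / k) ^ 2
                / (1 + y ^ 2 / 2 * deriv (Gmol G ρ k) t))) := by
      filter_upwards [hev] with k hk t y
      by_cases ht : t ∈ Set.Icc (-(2 * δ)) (2 * δ)
      · simp only [fk]
        rw [div_pow, Real.sq_sqrt (q_pos (hm.le.trans (hmem k hk.1 t ht).1) y).le,
          Real.sqrt_div_self]
        simp only [div_eq_mul_inv, mul_inv]
        ring
      · simp [fk, hχ_out t ht]
    have hval : Real.sqrt 2 * Real.pi = 2 * (Real.sqrt 2 * Real.pi / 2) := by ring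
    rw [hval, mul_assoc]
    refine Filter.Tendsto.const_mul 2 ?_
    rw [← setIntegral_to_interval hδ hχsupp
      (A := fun t => ∫ y : ℝ, χ t ^ 2 * (Real.sqrt (1 + G t ^ 2) / (1 + G t ^ 2)) *
        (g t / (1 + y ^ 2 / 2 * g t) * (1 / (1 + y ^ 2 / 2 * g t))))]
    · refine tendsto_iterated measurableSet_Ioo hfin (C := M / c) ?_ ?_ ?_
      · filter_upwards [hform] with k hk
        refine ⟨fun t y => χ t ^ 2 * (Real.sqrt (1 + G₁ t ^ 2) / (1 + G₁ t ^ 2)) *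
            (g t / (1 + y ^ 2 / 2 * g t) * (χ (y / k) ^ 2
                / (1 + y ^ 2 / 2 * deriv (Gmol G ρ k) t))), ?_, fun t ht y => ?_⟩
        · have := ham k
          simp only [Function.uncurry_def]
          fun_prop
        · rw [hk, hG₁ t ht]
      · filter_upwards [hform, hev] with k hk hkev t _ y
        rw [hk]
        by_cases ht : t ∈ Set.Icc (-(2 * δ)) (2 * δ)
        · have ha := hmem k hkev.1 t ht
          have hb := hmM t (hJ ht)
          have hb0 : 0 ≤ g t := hm.le.trans hb.1
          have ha0 : 0 ≤ deriv (Gmol G ρ k) t := hm.le.trans ha.1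
          have hw := weight_mem (G t)
          have hq1 := q_pos hb0 y
          have hq2 := q_pos ha0 y
          rw [abs_of_nonneg (mul_nonneg (mul_nonneg (hχsq t).1 hw.1) (by positivity))]
          refine (mul_le_of_le_one_left (by positivity)
            (mul_le_one₀ (hχsq t).2 hw.1 hw.2)).trans ?_
          have h1 : g t / (1 + y ^ 2 / 2 * g t) ≤ M :=
            (div_le_self hb0 (by linarith [show 0 ≤ y ^ 2 / 2 * g t by positivity])).trans hb.2
          have h2 : χ (y / k) ^ 2 / (1 + y ^ 2 / 2 * deriv (Gmol G ρ k) t)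
              ≤ 1 / (c * (1 + y ^ 2)) :=
            div_le_div₀ zero_le_one (hχsq _).2 (by positivity) (q_lower ha.1 y)
          calc _ ≤ M * (1 / (c * (1 + y ^ 2))) := by gcongr
            _ = M / c * (1 + y ^ 2)⁻¹ := by field_simp
        · rw [hχ_out t ht]
          simp only [ne_eq, OfNat.ofNat_ne_zero, not_false_eq_true, zero_pow, zero_mul, abs_zero]
          positivity
      · intro t _ y
        refine Filter.Tendsto.congr'
          (hform.mono fun k hk => (hk t y).symm) ?_
        by_cases ht : t ∈ Set.Icc (-(2 * δ)) (2 * δ)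
        · have hq := q_pos (hm.le.trans (hmM t (hJ ht)).1) y
          have hqa := ((hlim t ht).const_mul (y ^ 2 / 2)).const_add 1
          have hall := ((tendsto_cutoff hδ hχeq y).pow 2).div hqa hq.ne'
          have h2 := (hall.const_mul (g t / (1 + y ^ 2 / 2 * g t))).const_mul
            (χ t ^ 2 * (Real.sqrt (1 + G t ^ 2) / (1 + G t ^ 2)))
          simp only [one_pow] at h2
          exact h2
        · rw [hχ_out t ht]
          simp
    · intro t ht
      rw [integral_const_mul, integral_zeroth (hG' t ht), ← sqrt_quot]
      ring
end
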